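/- arXiv:1002.2352 — 2 statements merged into one kernel-verified Lean document; each statement's English description precedes it below -/
import Mathlib

section
/- Let A be a 4-dimensional absolute-valued real algebra. Then A satisfies the identity (x², x, x) = 0 (i.e. (x² x) x = x² (x x) for all x ∈ A, where x² = xx) if and only if A is isomorphic to ℍ or to *ℍ. -/
open MeasureTheory
open scoped Quaternion RealInnerProductSpace

/-- The norm of a finite-dimensional absolute-valued real algebra satisfies the parallelogram
identity: integrating `φ (x * y) ^ 2` over the unit ball in `x`, for a linear form `φ`, gives a
quadratic form in `y` proportional to `‖y‖ ^ 2`. -/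
theorem parallelogram_of_norm_mul {A : Type*} [NormedAddCommGroup A] [NormedSpace ℝ A]
    [FiniteDimensional ℝ A] (mul : A →ₗ[ℝ] A →ₗ[ℝ] A)
    (habs : ∀ x y : A, ‖mul x y‖ = ‖x‖ * ‖y‖) (x y : A) :
    ‖x + y‖ * ‖x + y‖ + ‖x - y‖ * ‖x - y‖ = 2 * (‖x‖ * ‖x‖ + ‖y‖ * ‖y‖) := by
  rcases subsingleton_or_nontrivial A with hA | hA
  · simp [Subsingleton.elim x 0, Subsingleton.elim y 0]
  let _ : MeasurableSpace A := borel A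
  have : BorelSpace A := ⟨rfl⟩
  let μ : Measure A := Measure.addHaar
  let U : Set A := Metric.closedBall 0 1
  obtain ⟨v, hv⟩ := exists_ne (0 : A)
  obtain ⟨φ, hφ⟩ := exists_dual_vector ℝ v (by simpa using hv)
  have hint : ∀ f : A → ℝ, Continuous f → IntegrableOn f U μ := fun f hf =>
    hf.continuousOn.integrableOn_compact (isCompact_closedBall 0 1)
  have hcont : ∀ z, Continuous fun w => mul w z := fun z =>
    (mul.flip z).continuous_of_finiteDimensional
  have hunit : ∀ z : A, ‖z‖ = 1 → ∫ w in U, φ (mul w z) ^ 2 ∂μ = ∫ w in U, φ w ^ 2 ∂μ := by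
    intro z hz
    let R : A →ₗᵢ[ℝ] A := ⟨mul.flip z, fun w => by simp [habs, hz]⟩
    let Re : A ≃ₗᵢ[ℝ] A := R.toLinearIsometryEquiv rfl
    have hRe : ∀ w, Re w = mul w z := fun w => rfl
    have hpre : (Re : A →ₗ[ℝ] A) ⁻¹' U = U := by
      ext w; simp [U]
    have hdet : LinearMap.det (Re.toLinearEquiv : A →ₗ[ℝ] A) ≠ 0 :=
      (LinearEquiv.isUnit_det' Re.toLinearEquiv).ne_zero
    have hmap := Measure.map_linearMap_addHaar_eq_smul_addHaar μ hdet
    have hvol := Measure.addHaar_preimage_linearMap μ hdet U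
    have hU0 : μ U ≠ 0 := (Metric.measure_closedBall_pos μ 0 one_pos).ne'
    have hU1 : μ U ≠ ⊤ := (isCompact_closedBall (0 : A) 1).measure_lt_top.ne
    have hone : ENNReal.ofReal |(LinearMap.det (Re.toLinearEquiv : A →ₗ[ℝ] A))⁻¹| = 1 := by
      have h1 : 1 * μ U =
          ENNReal.ofReal |(LinearMap.det (Re.toLinearEquiv : A →ₗ[ℝ] A))⁻¹| * μ U := by
        rw [← hvol, one_mul]; exact congrArg μ hpre.symm
      exact ((ENNReal.mul_left_inj hU0 hU1).1 h1).symm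
    rw [hone, one_smul] at hmap
    have hmp : MeasurePreserving Re μ μ := ⟨Re.continuous.measurable, hmap⟩
    have := hmp.setIntegral_preimage_emb Re.toHomeomorph.measurableEmbedding
      (fun w => φ w ^ 2) U
    rw [← this]
    have hpre' : Re ⁻¹' U = U := hpre
    rw [hpre']
    rfl
  have hpos : 0 < ∫ w in U, φ w ^ 2 ∂μ := by
    rw [integral_pos_iff_support_of_nonneg (fun w => sq_nonneg _)
      (hint _ (φ.continuous.pow 2))]
    have hopen : IsOpen (Metric.ball (0 : A) 1 ∩ {w | φ w ≠ 0}) :=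
      Metric.isOpen_ball.inter (isOpen_ne_fun φ.continuous continuous_const)
    have hne : (Metric.ball (0 : A) 1 ∩ {w | φ w ≠ 0}).Nonempty := by
      refine ⟨(2 * ‖v‖)⁻¹ • v, ?_, ?_⟩
      · have : ‖v‖ ≠ 0 := norm_ne_zero_iff.2 hv
        simp only [Metric.mem_ball, dist_zero_right, norm_smul, norm_inv, norm_mul, norm_norm]
        field_simp; norm_num
      · have : ‖v‖ ≠ 0 := norm_ne_zero_iff.2 hv
        simp [hφ.2, hv]
    refine (hopen.measure_pos μ hne).trans_le ?_
    rw [Measure.restrict_apply' Metric.isClosed_closedBall.measurableSet]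
    refine measure_mono fun w hw => ⟨?_, Metric.ball_subset_closedBall hw.1⟩
    simpa using hw.2
  set c := ∫ w in U, φ w ^ 2 ∂μ with hc
  have hquad : ∀ z : A, ∫ w in U, φ (mul w z) ^ 2 ∂μ = c * (‖z‖ * ‖z‖) := by
    intro z
    rcases eq_or_ne z 0 with rfl | hz
    · simp
    have hz' : ‖z‖ ≠ 0 := norm_ne_zero_iff.2 hz
    have h1 := hunit (‖z‖⁻¹ • z) (by simp [norm_smul, hz'])
    simp only [map_smul, smul_eq_mul, mul_pow, integral_const_mul] at h1
    rw [← h1]; field_simp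
  have hci : ∀ z, IntegrableOn (fun w => φ (mul w z) ^ 2) U μ := fun z =>
    hint _ ((φ.continuous.comp (hcont z)).pow 2)
  apply mul_left_cancel₀ hpos.ne'
  rw [mul_add, ← hquad, ← hquad, mul_left_comm, mul_add, ← hquad, ← hquad,
    ← integral_add (hci _) (hci _), ← integral_add (hci _) (hci _), ← integral_const_mul]
  congr 1
  ext w
  simp only [map_add, map_sub]
  ring

/-- A four-dimensional unital real algebra with a multiplicative Euclidean norm is isometrically
isomorphic to the quaternions. -/
theorem exists_linearIsometryEquiv_quaternion {V : Type*} [NormedAddCommGroup V]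
    [InnerProductSpace ℝ V] (hdim : Module.finrank ℝ V = 4) (mul : V →ₗ[ℝ] V →ₗ[ℝ] V)
    (habs : ∀ x y : V, ‖mul x y‖ = ‖x‖ * ‖y‖) (e : V) (he : ‖e‖ = 1)
    (hl : ∀ x, mul e x = x) (hr : ∀ x, mul x e = x) :
    ∃ T : V ≃ₗᵢ[ℝ] ℍ[ℝ], ∀ x y, T (mul x y) = T x * T y := by
  have : FiniteDimensional ℝ V := Module.finite_of_finrank_pos (by omega)
  have hL : ∀ x y z : V, ⟪mul x y, mul x z⟫ = ‖x‖ ^ 2 * ⟪y, z⟫ := by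
    intro x y z
    rw [real_inner_eq_norm_add_mul_self_sub_norm_mul_self_sub_norm_mul_self_div_two, ← map_add,
      real_inner_eq_norm_add_mul_self_sub_norm_mul_self_sub_norm_mul_self_div_two y z]
    simp only [habs]; ring
  have hR : ∀ x y z : V, ⟪mul y x, mul z x⟫ = ‖x‖ ^ 2 * ⟪y, z⟫ := by
    intro x y z
    rw [real_inner_eq_norm_add_mul_self_sub_norm_mul_self_sub_norm_mul_self_div_two,
      ← LinearMap.add_apply, ← map_add,
      real_inner_eq_norm_add_mul_self_sub_norm_mul_self_sub_norm_mul_self_div_two y z]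
    simp only [habs]; ring
  have hskewL : ∀ x y z : V, ⟪x, e⟫ = 0 → ⟪mul x y, z⟫ = -⟪y, mul x z⟫ := by
    intro x y z hx
    have h := hR (y + z) x e
    have hy := hR y x e
    have hz := hR z x e
    simp only [map_add, hl, inner_add_left, inner_add_right, hx, mul_zero] at h hy hz
    rw [real_inner_comm (mul x z) y]
    linarith
  have hskewR : ∀ x y z : V, ⟪x, e⟫ = 0 → ⟪mul y x, z⟫ = -⟪y, mul z x⟫ := by
    intro x y z hx
    have h := hL (y + z) x e
    have hy := hL y x e
    have hz := hL z x e
    simp only [map_add, LinearMap.add_apply, hr, inner_add_left, inner_add_right, hx,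
      mul_zero] at h hy hz
    rw [real_inner_comm (mul z x) y]
    linarith
  have hsqL : ∀ x y : V, ⟪x, e⟫ = 0 → mul x (mul x y) = -(‖x‖ ^ 2 • y) := by
    intro x y hx
    refine ext_inner_right ℝ fun z => ?_
    rw [hskewL x _ z hx, hL, inner_neg_left, real_inner_smul_left]
  have hsqR : ∀ x y : V, ⟪x, e⟫ = 0 → mul (mul y x) x = -(‖x‖ ^ 2 • y) := by
    intro x y hx
    refine ext_inner_right ℝ fun z => ?_
    rw [hskewR x _ z hx, hR, inner_neg_left, real_inner_smul_left]
  obtain ⟨b, hb⟩ := Orthonormal.exists_orthonormalBasis_extension_of_card_eq (𝕜 := ℝ)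
    (ι := Fin 4) (by simp [hdim]) (v := fun _ => e) (s := {0})
    ⟨fun _ => he, fun i j hij => (hij (Subsingleton.elim i j)).elim⟩
  have hb0 : b 0 = e := hb 0 rfl
  obtain ⟨i, hi⟩ : ∃ i, i = b 1 := ⟨_, rfl⟩
  obtain ⟨j, hj⟩ : ∃ j, j = b 2 := ⟨_, rfl⟩
  have hon := b.orthonormal
  have ni : ‖i‖ = 1 := by rw [hi]; exact hon.1 1
  have nj : ‖j‖ = 1 := by rw [hj]; exact hon.1 2
  have hie : ⟪i, e⟫ = 0 := by rw [hi, ← hb0]; exact hon.2 (by decide)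
  have hje : ⟪j, e⟫ = 0 := by rw [hj, ← hb0]; exact hon.2 (by decide)
  have hij : ⟪i, j⟫ = 0 := by rw [hi, hj]; exact hon.2 (by decide)
  obtain ⟨k, hk⟩ : ∃ k, mul i j = k := ⟨_, rfl⟩
  have nk : ‖k‖ = 1 := by rw [← hk, habs, ni, nj, one_mul]
  have hke : ⟪k, e⟫ = 0 := by
    rw [← hk, hskewL i j e hie, hr, real_inner_comm, hij, neg_zero]
  have hki : ⟪k, i⟫ = 0 := by
    have := hL i j e
    rwa [hr, hk, hje, mul_zero] at this
  have hkj : ⟪k, j⟫ = 0 := by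
    have := hR j i e
    rwa [hl, hk, hie, mul_zero] at this
  have hii : mul i i = -e := by simpa [hr, ni] using hsqL i e hie
  have hjj : mul j j = -e := by simpa [hr, nj] using hsqL j e hje
  have hkk : mul k k = -e := by simpa [hr, nk] using hsqL k e hke
  have hik : mul i k = -j := by simpa [hk, ni] using hsqL i j hie
  have hkj' : mul k j = -i := by simpa [hk, nj] using hsqR j i hje
  have hji : mul j i = -k := by
    have h := hsqL (i + j) e (by rw [inner_add_left, hie, hje, add_zero])
    have hn : ‖i + j‖ ^ 2 = 2 := by
      rw [norm_add_sq_real, hij, ni, nj]; norm_num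
    simp only [hr, hn, map_add, LinearMap.add_apply, hii, hjj, hk, two_smul] at h
    rw [eq_neg_iff_add_eq_zero]
    have h' : mul j i + k = (-e + mul j i + (k + -e)) - (-(e + e)) := by abel
    rw [h', h, sub_self]
  have hjk : mul j k = i := by
    have := hsqL j i hje
    rw [hji, nj, map_neg, one_pow, one_smul] at this
    exact neg_injective this
  have hki' : mul k i = j := by
    have := hsqR i j hie
    rw [hji, ni, map_neg, LinearMap.neg_apply, one_pow, one_smul] at this
    exact neg_injective this
  let S : ℍ[ℝ] →ₗ[ℝ] V :=
    { toFun := fun q => q.re • e + q.imI • i + q.imJ • j + q.imK • k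
      map_add' := fun p q => by
        simp only [Quaternion.re_add, Quaternion.imI_add, Quaternion.imJ_add, Quaternion.imK_add]
        module
      map_smul' := fun r q => by
        simp only [Quaternion.re_smul, Quaternion.imI_smul, Quaternion.imJ_smul,
          Quaternion.imK_smul, smul_eq_mul, RingHom.id_apply]
        module }
  have hS : ∀ q : ℍ[ℝ], S q = q.re • e + q.imI • i + q.imJ • j + q.imK • k := fun _ => rfl
  have hnorm : ∀ q : ℍ[ℝ], ‖S q‖ = ‖q‖ := by
    intro q
    have hei : ⟪e, i⟫ = 0 := by rw [real_inner_comm, hie]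
    have hej : ⟪e, j⟫ = 0 := by rw [real_inner_comm, hje]
    have hek : ⟪e, k⟫ = 0 := by rw [real_inner_comm, hke]
    have hji' : ⟪j, i⟫ = 0 := by rw [real_inner_comm, hij]
    have hik' : ⟪i, k⟫ = 0 := by rw [real_inner_comm, hki]
    have hjk' : ⟪j, k⟫ = 0 := by rw [real_inner_comm, hkj]
    have hself : ∀ v : V, ‖v‖ = 1 → ⟪v, v⟫ = 1 := fun v hv => by
      rw [real_inner_self_eq_norm_sq, hv, one_pow]
    rw [← sq_eq_sq₀ (norm_nonneg _) (norm_nonneg _), sq ‖q‖, ← Quaternion.normSq_eq_norm_mul_self,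
      Quaternion.normSq_def', ← real_inner_self_eq_norm_sq, hS]
    simp only [inner_add_left, inner_add_right, real_inner_smul_left, real_inner_smul_right,
      hself e he, hself i ni, hself j nj, hself k nk, hie, hje, hke, hij, hki, hkj, hei, hej, hek,
      hji', hik', hjk']
    ring
  have hmul : ∀ p q : ℍ[ℝ], S (p * q) = mul (S p) (S q) := by
    intro p q
    simp only [hS, map_add, map_smul, LinearMap.add_apply, LinearMap.smul_apply, hl, hr, hii, hjj,
      hkk, hk, hji, hik, hki', hjk, hkj', Quaternion.re_mul, Quaternion.imI_mul,
      Quaternion.imJ_mul, Quaternion.imK_mul]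
    module
  let T : ℍ[ℝ] ≃ₗᵢ[ℝ] V := LinearIsometry.toLinearIsometryEquiv ⟨S, hnorm⟩
    (by rw [hdim, Quaternion.finrank_eq_four])
  have hT : ∀ q, T q = S q := fun _ => rfl
  refine ⟨T.symm, fun x y => ?_⟩
  apply T.injective
  rw [T.apply_symm_apply, hT, hmul, ← hT, ← hT, T.apply_symm_apply, T.apply_symm_apply]

/-- Every linear isometry of the quaternions is `x ↦ p x q` or `x ↦ p x̄ q`. -/
theorem Quaternion.linearIsometryEquiv_eq_mul (f : ℍ[ℝ] ≃ₗᵢ[ℝ] ℍ[ℝ]) :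
    ∃ p q : ℍ[ℝ], p ≠ 0 ∧ q ≠ 0 ∧ ((∀ x, f x = p * x * q) ∨ ∀ x, f x = p * star x * q) := by
  obtain ⟨l, -, rfl⟩ := f.reflections_generate_dim
  induction l with
  | nil => exact ⟨1, 1, one_ne_zero, one_ne_zero, Or.inl fun x => by simp⟩
  | cons v l ih =>
    obtain ⟨p, q, hp, hq, h⟩ := ih
    simp only [List.map_cons, List.prod_cons, LinearIsometryEquiv.coe_mul, Function.comp_apply]
    rcases eq_or_ne v 0 with rfl | hv
    · refine ⟨p, q, hp, hq, ?_⟩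
      have hid : ∀ x, (ℝ ∙ (0 : ℍ[ℝ]))ᗮ.reflection x = x := fun x =>
        Submodule.reflection_mem_subspace_eq_self (by simp)
      simpa only [hid] using h
    have hrefl : ∀ x, (ℝ ∙ v)ᗮ.reflection x = -((Quaternion.normSq v)⁻¹ • (v * star x * v)) := by
      intro x
      have hn : Quaternion.normSq v ≠ 0 := Quaternion.normSq_ne_zero.2 hv
      rw [Submodule.reflection_orthogonal_apply, Submodule.reflection_singleton_apply]
      have h2 : v * star x * v + Quaternion.normSq v • x = (2 * ⟪v, x⟫) • v := by
        rw [Quaternion.inner_def, Quaternion.normSq_def']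
        ext <;> simp <;> ring
      have h3 : (‖v‖ : ℝ) ^ 2 = Quaternion.normSq v := by
        rw [Quaternion.normSq_eq_norm_mul_self, sq]
      simp only [RCLike.ofReal_real_eq_id, id, h3, neg_inj]
      rw [eq_inv_smul_iff₀ hn, eq_sub_of_add_eq h2, smul_sub, two_smul, ← two_smul ℝ, smul_smul,
        smul_smul]
      congr 2
      field_simp
    have hc : -(Quaternion.normSq v)⁻¹ ≠ 0 := neg_ne_zero.2 (inv_ne_zero
      (Quaternion.normSq_ne_zero.2 hv))
    rcases h with h | h
    · refine ⟨-(Quaternion.normSq v)⁻¹ • (v * star q), star p * v,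
        smul_ne_zero hc (mul_ne_zero hv (star_ne_zero.2 hq)),
        mul_ne_zero (star_ne_zero.2 hp) hv, Or.inr fun x => ?_⟩
      rw [h, hrefl]
      simp [mul_assoc]
    · refine ⟨-(Quaternion.normSq v)⁻¹ • (v * star q), star p * v,
        smul_ne_zero hc (mul_ne_zero hv (star_ne_zero.2 hq)),
        mul_ne_zero (star_ne_zero.2 hp) hv, Or.inl fun x => ?_⟩
      rw [h, hrefl]
      simp [mul_assoc]

namespace Quaternion

theorem exists_components (a b c d : ℝ) :
    ∃ q : ℍ[ℝ], q.re = a ∧ q.imI = b ∧ q.imJ = c ∧ q.imK = d :=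
  ⟨⟨a, b, c, d⟩, rfl, rfl, rfl, rfl⟩

theorem eq_of_add_self_eq {a b : ℍ[ℝ]} (h : a + a = b + b) : a = b := by
  rw [← two_smul ℝ a, ← two_smul ℝ b] at h
  exact smul_right_injective _ two_ne_zero h

/-- A quaternion commuting with all imaginary units is real. -/
theorem eq_coe_re_of_commute {q : ℍ[ℝ]}
    (h : ∀ u : ℍ[ℝ], u * u = -1 → star u = -u → q * u = u * q) : q = (q.re : ℍ[ℝ]) := by
  obtain ⟨i, i0, i1, i2, i3⟩ := exists_components 0 1 0 0
  obtain ⟨j, j0, j1, j2, j3⟩ := exists_components 0 0 1 0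
  have hi := h i (by ext <;> simp [i0, i1, i2, i3]) (by ext <;> simp [i0, i1, i2, i3])
  have hj := h j (by ext <;> simp [j0, j1, j2, j3]) (by ext <;> simp [j0, j1, j2, j3])
  have h1 := congrArg (fun x : ℍ[ℝ] => x.imK) hi
  have h2 := congrArg (fun x : ℍ[ℝ] => x.imJ) hi
  have h3 := congrArg (fun x : ℍ[ℝ] => x.imK) hj
  simp [i0, i1, i2, i3, j0, j1, j2, j3] at h1 h2 h3
  ext <;> simp <;> linarith

/-- A quaternion anticommuting with all imaginary units is zero. -/
theorem eq_zero_of_anticommute {q : ℍ[ℝ]}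
    (h : ∀ u : ℍ[ℝ], u * u = -1 → star u = -u → q * u = -(u * q)) : q = 0 := by
  obtain ⟨i, i0, i1, i2, i3⟩ := exists_components 0 1 0 0
  obtain ⟨j, j0, j1, j2, j3⟩ := exists_components 0 0 1 0
  obtain ⟨k, k0, k1, k2, k3⟩ := exists_components 0 0 0 1
  have hi := h i (by ext <;> simp [i0, i1, i2, i3]) (by ext <;> simp [i0, i1, i2, i3])
  have hj := h j (by ext <;> simp [j0, j1, j2, j3]) (by ext <;> simp [j0, j1, j2, j3])
  have hk := h k (by ext <;> simp [k0, k1, k2, k3]) (by ext <;> simp [k0, k1, k2, k3])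
  have h1 := congrArg (fun x : ℍ[ℝ] => x.re) hi
  have h2 := congrArg (fun x : ℍ[ℝ] => x.imI) hi
  have h3 := congrArg (fun x : ℍ[ℝ] => x.re) hj
  have h4 := congrArg (fun x : ℍ[ℝ] => x.re) hk
  simp [i0, i1, i2, i3, j0, j1, j2, j3, k0, k1, k2, k3] at h1 h2 h3 h4
  ext <;> simp <;> linarith

/-- Every quaternion commutes with some imaginary unit. -/
theorem exists_imaginary_unit_commute (c : ℍ[ℝ]) :
    ∃ u : ℍ[ℝ], u * u = -1 ∧ star u = -u ∧ u * c = c * u ∧ u * star c = star c * u := by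
  rcases eq_or_ne (c.imI ^ 2 + c.imJ ^ 2 + c.imK ^ 2) 0 with h | h
  · have h1 : c.imI = 0 := by nlinarith [sq_nonneg c.imI, sq_nonneg c.imJ, sq_nonneg c.imK]
    have h2 : c.imJ = 0 := by nlinarith [sq_nonneg c.imI, sq_nonneg c.imJ, sq_nonneg c.imK]
    have h3 : c.imK = 0 := by nlinarith [sq_nonneg c.imI, sq_nonneg c.imJ, sq_nonneg c.imK]
    obtain ⟨i, i0, i1, i2, i3⟩ := exists_components 0 1 0 0
    refine ⟨i, ?_, ?_, ?_, ?_⟩ <;> ext <;> simp [h1, h2, h3, i0, i1, i2, i3]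
  · obtain ⟨r, hr⟩ : ∃ r : ℝ, r ^ 2 * (c.imI ^ 2 + c.imJ ^ 2 + c.imK ^ 2) = 1 := by
      refine ⟨(√(c.imI ^ 2 + c.imJ ^ 2 + c.imK ^ 2))⁻¹, ?_⟩
      rw [inv_pow, Real.sq_sqrt (by positivity), inv_mul_cancel₀ h]
    obtain ⟨u, u0, u1, u2, u3⟩ := exists_components 0 (r * c.imI) (r * c.imJ) (r * c.imK)
    refine ⟨u, ?_, ?_, ?_, ?_⟩ <;> ext <;> simp [u0, u1, u2, u3] <;>
      first | ring1 | linear_combination -hr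

/-- If the product `x ⋄ y = p x y s` satisfies `(x², x, x) = 0` then `p` and `s` are real. -/
theorem real_of_mul_mul {p s : ℍ[ℝ]} (hp : p ≠ 0) (hs : s ≠ 0)
    (h : ∀ x : ℍ[ℝ], p * (p * (p * x * x * s) * x * s) * x * s =
      p * (p * x * x * s) * (p * x * x * s) * s) :
    p = (p.re : ℍ[ℝ]) ∧ s = (s.re : ℍ[ℝ]) := by
  have h' : ∀ x : ℍ[ℝ], p * (x * x * s * x * s * x) = x * x * s * p * (x * x) * s := by
    intro x
    apply mul_left_cancel₀ hp
    apply mul_left_cancel₀ hp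
    apply mul_right_cancel₀ hs
    simpa only [mul_assoc] using h x
  have hps : p * s = s * p := by
    have := h' 1
    simp only [one_mul, mul_one, ← mul_assoc] at this
    exact mul_right_cancel₀ hs this
  have hsre : s = (s.re : ℍ[ℝ]) := by
    refine eq_coe_re_of_commute fun u hu _ => ?_
    have h1 := h' u
    rw [hu] at h1
    have h2 : p * (s * (u * s * u)) = p * (s * -s) := by
      calc p * (s * (u * s * u)) = -(p * (-1 * s * u * s * u)) := by simp [mul_assoc]
        _ = -(s * p * s) := by rw [h1]; simp
        _ = p * (s * -s) := by rw [← hps]; simp [mul_assoc]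
    have h3 := mul_left_cancel₀ hs (mul_left_cancel₀ hp h2)
    have h4 : s * u = u * (-(u * s * u)) := by
      rw [mul_neg, ← mul_assoc, ← mul_assoc, hu]; simp
    rw [h4, h3, neg_neg]
  have hcom : ∀ x, s * x = x * s := fun x => by rw [hsre]; exact coe_commutes _ _
  refine ⟨eq_coe_re_of_commute fun u hu _ => ?_, hsre⟩
  have hw : (1 + u) * (1 + u) = u + u := by
    rw [mul_add, add_mul, add_mul, hu]; simp; abel
  have h1 := h' (1 + u)
  have hu0 : u ≠ 0 := by rintro rfl; simp at hu
  have hw0 : u + u ≠ 0 := fun h0 => hu0 (eq_of_add_self_eq (h0.trans (add_zero 0).symm))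
  have h2 : p * (u + u) * ((u + u) * (s * s)) = (u + u) * p * ((u + u) * (s * s)) := by
    calc p * (u + u) * ((u + u) * (s * s))
        = p * ((1 + u) * (1 + u) * ((1 + u) * (1 + u)) * s * s) := by
          rw [hw]; simp only [mul_assoc]
      _ = p * ((1 + u) * (1 + u) * s * (1 + u) * s * (1 + u)) := by
          simp only [mul_assoc, hcom]
      _ = _ := by
          rw [h1, hw]; simp only [mul_assoc, hcom]
  have h3 := mul_right_cancel₀ (mul_ne_zero hw0 (mul_ne_zero hs hs)) h2
  rw [mul_add, add_mul] at h3
  exact eq_of_add_self_eq h3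

/-- If the product `x ⋄ y = x̄ c y s` satisfies `(x², x, x) = 0` then `c` and `s` are real. -/
theorem real_of_star_mul_mul {c s : ℍ[ℝ]} (hc : c ≠ 0) (hs : s ≠ 0)
    (h : ∀ x : ℍ[ℝ], star (star (star x * c * x * s) * c * x * s) * c * x * s =
      star (star x * c * x * s) * c * (star x * c * x * s) * s) :
    c = (c.re : ℍ[ℝ]) ∧ s = (s.re : ℍ[ℝ]) := by
  have h' : ∀ x : ℍ[ℝ], x ≠ 0 → star x * c * x * s * c * x = x * c * star x * c * x * s := by
    intro x hx
    apply mul_left_cancel₀ (star_ne_zero.2 hc)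
    apply mul_left_cancel₀ (star_ne_zero.2 hx)
    apply mul_left_cancel₀ (star_ne_zero.2 hs)
    apply mul_right_cancel₀ hs
    simpa only [mul_assoc, star_mul, star_star] using h x
  have hcs : s * c = c * s := by
    have := h' 1 one_ne_zero
    simp only [star_one, one_mul, mul_one, mul_assoc] at this
    exact mul_left_cancel₀ hc this
  have hsre : s = (s.re : ℍ[ℝ]) := by
    refine eq_coe_re_of_commute fun u hu hu' => ?_
    have hu0 : u ≠ 0 := by rintro rfl; simp at hu
    have h1 := h' u hu0
    rw [hu'] at h1
    simp only [neg_mul, mul_neg, neg_inj, mul_assoc] at h1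
    have h2 := mul_left_cancel₀ hu0 (mul_left_cancel₀ hc (mul_left_cancel₀ hu0 h1))
    rw [← mul_assoc, hcs, mul_assoc] at h2
    exact mul_left_cancel₀ hc h2
  have hcom : ∀ x, s * x = x * s := fun x => by rw [hsre]; exact coe_commutes _ _
  refine ⟨eq_coe_re_of_commute fun u hu hu' => ?_, hsre⟩
  have hx0 : 1 + u ≠ 0 := by
    intro h0
    rw [← neg_eq_of_add_eq_zero_right h0] at hu
    have := congrArg (fun x : ℍ[ℝ] => x.re) hu
    norm_num at this
  have h1 := h' (1 + u) hx0
  have h2 : star (1 + u) * c * (1 + u) * (c * (1 + u) * s) =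
      (1 + u) * c * star (1 + u) * (c * (1 + u) * s) := by
    simpa only [mul_assoc, hcom] using h1
  have h3 := mul_right_cancel₀ (mul_ne_zero (mul_ne_zero hc hx0) hs) h2
  rw [star_add, star_one, hu'] at h3
  have h4 : c * u + c * u = u * c + u * c := by
    rw [← sub_eq_zero] at h3 ⊢
    rw [← h3]
    noncomm_ring
  exact eq_of_add_self_eq h4

/-- The product `x ⋄ y = p x c ȳ` does not satisfy `(x², x, x) = 0`. -/
theorem false_of_mul_star {p c : ℍ[ℝ]} (hp : p ≠ 0) (hc : c ≠ 0)
    (h : ∀ x : ℍ[ℝ], p * (p * (p * x * c * star x) * c * star x) * c * star x =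
      p * (p * x * c * star x) * c * star (p * x * c * star x)) : False := by
  have h' : ∀ x : ℍ[ℝ], p * (x * (c * (star x * (c * (star x * (c * star x)))))) =
      x * (c * (star x * (c * (x * (star c * (star x * star p)))))) := by
    intro x
    apply mul_left_cancel₀ hp
    apply mul_left_cancel₀ hp
    simpa only [mul_assoc, star_mul, star_star] using h x
  obtain ⟨u, hu, hu', huc, huc'⟩ := exists_imaginary_unit_commute c
  have h1 := h' 1
  have h2 := h' u
  have e1 : ∀ z, u * (u * z) = -z := fun z => by rw [← mul_assoc, hu, neg_one_mul]
  have e2 : ∀ z, u * (c * z) = c * (u * z) := fun z => by rw [← mul_assoc, huc, mul_assoc]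
  have e3 : ∀ z, u * (star c * z) = star c * (u * z) := fun z => by
    rw [← mul_assoc, huc', mul_assoc]
  simp only [hu', neg_mul, mul_neg, e1, e2, e3, huc, hu, neg_neg, mul_one] at h2
  simp only [star_one, one_mul, mul_one] at h1
  rw [← h1] at h2
  have h3 : p * (c * (c * c)) ≠ 0 := mul_ne_zero hp (mul_ne_zero hc (mul_ne_zero hc hc))
  exact h3 (eq_of_add_self_eq (by rw [add_zero]; nth_rewrite 1 [← h2]; exact neg_add_cancel _))

/-- The product `x ⋄ y = p x̄ ȳ s` does not satisfy `(x², x, x) = 0`. -/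
theorem false_of_star_mul_star {p s : ℍ[ℝ]} (hp : p ≠ 0) (hs : s ≠ 0)
    (h : ∀ x : ℍ[ℝ], p * star (p * star (p * star x * star x * s) * star x * s) * star x * s =
      p * star (p * star x * star x * s) * star (p * star x * star x * s) * s) : False := by
  have h' : ∀ x : ℍ[ℝ], x ≠ 0 → p * (star x * (star x * (s * (star p * star x)))) =
      x * (star p * (star s * (x * (x * star p)))) := by
    intro x hx
    apply mul_left_cancel₀ hx
    apply mul_left_cancel₀ (star_ne_zero.2 hs)
    apply mul_left_cancel₀ hp
    apply mul_right_cancel₀ hs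
    simpa only [mul_assoc, star_mul, star_star] using h x
  have h1 := h' 1 one_ne_zero
  simp only [star_one, one_mul, mul_one] at h1
  have h0 : p * (s * star p) = 0 := by
    refine eq_zero_of_anticommute fun u hu hu' => ?_
    have hu0 : u ≠ 0 := by rintro rfl; simp at hu
    have e1 : ∀ z, u * (u * z) = -z := fun z => by rw [← mul_assoc, hu, neg_one_mul]
    have h2 := h' u hu0
    simp only [hu', neg_mul, mul_neg, e1, neg_neg, ← h1] at h2
    simpa only [mul_assoc] using h2
  exact mul_ne_zero hp (mul_ne_zero hs (star_ne_zero.2 hp)) h0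

/-- Two-sided multiplication by nonzero quaternions, as a linear automorphism. -/
noncomputable def mulLeftRightEquiv (u v : ℍ[ℝ]) (hu : u ≠ 0) (hv : v ≠ 0) :
    ℍ[ℝ] ≃ₗ[ℝ] ℍ[ℝ] where
  toFun x := u * x * v
  invFun x := u⁻¹ * x * v⁻¹
  map_add' x y := by rw [mul_add, add_mul]
  map_smul' r x := by simp
  left_inv x := by
    change u⁻¹ * (u * x * v) * v⁻¹ = x
    rw [mul_assoc u, inv_mul_cancel_left₀ hu, mul_inv_cancel_right₀ hv]
  right_inv x := by
    change u * (u⁻¹ * x * v⁻¹) * v = x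
    rw [mul_assoc u⁻¹, mul_inv_cancel_left₀ hu, inv_mul_cancel_right₀ hv]

theorem mulLeftRightEquiv_apply (u v : ℍ[ℝ]) (hu : u ≠ 0) (hv : v ≠ 0) (x : ℍ[ℝ]) :
    mulLeftRightEquiv u v hu hv x = u * x * v := rfl

end Quaternion

/-- A four-dimensional absolute-valued real algebra is isotopic to the quaternions, through linear
isometries of the quaternions. -/
theorem exists_mul_eq_isometry_mul_isometry {A : Type*} [NormedAddCommGroup A] [NormedSpace ℝ A]
    (mul : A →ₗ[ℝ] A →ₗ[ℝ] A) (habs : ∀ x y : A, ‖mul x y‖ = ‖x‖ * ‖y‖)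
    (hdim : Module.finrank ℝ A = 4) :
    ∃ (T : A ≃ₗ[ℝ] ℍ[ℝ]) (f g : ℍ[ℝ] ≃ₗᵢ[ℝ] ℍ[ℝ]),
      ∀ x y, T (mul x y) = f (T x) * g (T y) := by
  have : FiniteDimensional ℝ A := Module.finite_of_finrank_pos (by omega)
  have : Nontrivial A := Module.nontrivial_of_finrank_pos (R := ℝ) (by omega)
  let _ : InnerProductSpace ℝ A := 
    InnerProductSpace.ofNorm ℝ (parallelogram_of_norm_mul mul habs)
  obtain ⟨a, ha⟩ := exists_norm_eq A zero_le_one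
  let R : A ≃ₗᵢ[ℝ] A := LinearIsometry.toLinearIsometryEquiv
    ⟨mul.flip a, fun w => by simp [habs, ha]⟩ rfl
  let L : A ≃ₗᵢ[ℝ] A := LinearIsometry.toLinearIsometryEquiv
    ⟨mul a, fun w => by simp [habs, ha]⟩ rfl
  have hR : ∀ x, R x = mul x a := fun _ => rfl
  have hL : ∀ x, L x = mul a x := fun _ => rfl
  let mul' : A →ₗ[ℝ] A →ₗ[ℝ] A :=
    mul.compl₁₂ (R.symm.toLinearEquiv : A →ₗ[ℝ] A) (L.symm.toLinearEquiv : A →ₗ[ℝ] A)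
  have hmul' : ∀ x y, mul' x y = mul (R.symm x) (L.symm y) := fun _ _ => rfl
  have hRa : R.symm (mul a a) = a := by rw [← hR, R.symm_apply_apply]
  have hLa : L.symm (mul a a) = a := by rw [← hL, L.symm_apply_apply]
  obtain ⟨T, hT⟩ := exists_linearIsometryEquiv_quaternion hdim mul'
    (fun x y => by rw [hmul', habs, LinearIsometryEquiv.norm_map, LinearIsometryEquiv.norm_map])
    (mul a a) (by rw [habs, ha, one_mul])
    (fun x => by rw [hmul', hRa, ← hL, L.apply_symm_apply])
    (fun x => by rw [hmul', hLa, ← hR, R.apply_symm_apply])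
  refine ⟨T.toLinearEquiv, (T.symm.trans R).trans T, (T.symm.trans L).trans T, fun x y => ?_⟩
  have := hT (R x) (L y)
  rw [hmul', R.symm_apply_apply, L.symm_apply_apply] at this
  simpa using this

/-- Transport of the identity `(x², x, x) = 0` along a linear isomorphism. -/
theorem identity_transport {A B : Type*} [AddCommGroup A] [Module ℝ A] [AddCommGroup B]
    [Module ℝ B] {mul : A →ₗ[ℝ] A →ₗ[ℝ] A} {m : B → B → B} (e : A ≃ₗ[ℝ] B)
    (he : ∀ x y, e (mul x y) = m (e x) (e y))
    (h : ∀ x : A, mul (mul (mul x x) x) x = mul (mul x x) (mul x x)) (x : B) :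
    m (m (m x x) x) x = m (m x x) (m x x) := by
  simpa only [he, e.apply_symm_apply] using congrArg e (h (e.symm x))

theorem exists_quaternion_iso_of_identity {A : Type*} [NormedAddCommGroup A] [NormedSpace ℝ A]
    (mul : A →ₗ[ℝ] A →ₗ[ℝ] A) (habs : ∀ x y : A, ‖mul x y‖ = ‖x‖ * ‖y‖)
    (hdim : Module.finrank ℝ A = 4)
    (h : ∀ x : A, mul (mul (mul x x) x) x = mul (mul x x) (mul x x)) :
    (∃ e : A ≃ₗ[ℝ] ℍ[ℝ], ∀ x y : A, e (mul x y) = e x * e y) ∨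
      (∃ e : A ≃ₗ[ℝ] ℍ[ℝ], ∀ x y : A, e (mul x y) = star (e x) * e y) := by
  obtain ⟨T, f, g, hT⟩ := exists_mul_eq_isometry_mul_isometry mul habs hdim
  obtain ⟨p, q, hp, hq, hf⟩ := Quaternion.linearIsometryEquiv_eq_mul f
  obtain ⟨q', s, hq', hs, hg⟩ := Quaternion.linearIsometryEquiv_eq_mul g
  obtain ⟨c, hc⟩ : ∃ c, c = q * q' := ⟨_, rfl⟩
  have hc0 : c ≠ 0 := hc ▸ mul_ne_zero hq hq'
  have hcp := star_ne_zero.2 hp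
  have hcs := star_ne_zero.2 hs
  have hcc := star_ne_zero.2 hc0
  rcases hf with hf | hf <;> rcases hg with hg | hg
  · have hT' : ∀ x y, T (mul x y) = p * T x * c * T y * s := fun x y => by
      rw [hT, hf, hg, hc]; simp only [mul_assoc]
    let e := T.trans (Quaternion.mulLeftRightEquiv c 1 hc0 one_ne_zero)
    have he : ∀ x, e x = c * T x := fun x => mul_one _
    have hem : ∀ x y, e (mul x y) = c * p * c⁻¹ * e x * e y * s := fun x y => by
      simp only [he, hT', mul_assoc, inv_mul_cancel_left₀ hc0]
    have hp' : c * p * c⁻¹ ≠ 0 := mul_ne_zero (mul_ne_zero hc0 hp) (inv_ne_zero hc0)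
    obtain ⟨h1, h2⟩ := Quaternion.real_of_mul_mul hp' hs
      (identity_transport (m := fun x y => c * p * c⁻¹ * x * y * s) e hem h)
    left
    refine ⟨e.trans (Quaternion.mulLeftRightEquiv _ _ hp' hs), fun x y => ?_⟩
    simp only [LinearEquiv.trans_apply, Quaternion.mulLeftRightEquiv_apply, hem]
    rw [h1, h2]
    simp only [Quaternion.coe_mul_eq_smul, Quaternion.mul_coe_eq_smul, smul_mul_assoc,
      mul_smul_comm]
  · have hT' : ∀ x y, T (mul x y) = p * T x * c * star (T y) * s := fun x y => by
      rw [hT, hf, hg, hc]; simp only [mul_assoc]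
    let e := T.trans (Quaternion.mulLeftRightEquiv (star s) 1 hcs one_ne_zero)
    have he : ∀ x, e x = star s * T x := fun x => mul_one _
    have hem : ∀ x y, e (mul x y) = star s * p * (star s)⁻¹ * e x * c * star (e y) := fun x y => by
      simp only [he, hT', mul_assoc, inv_mul_cancel_left₀ hcs, star_mul, star_star]
    exact (Quaternion.false_of_mul_star (mul_ne_zero (mul_ne_zero hcs hp) (inv_ne_zero hcs)) hc0
      (identity_transport (m := fun x y => star s * p * (star s)⁻¹ * x * c * star y) e hem h)).elim
  · have hT' : ∀ x y, T (mul x y) = p * star (T x) * c * T y * s := fun x y => by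
      rw [hT, hf, hg, hc]; simp only [mul_assoc]
    let e := T.trans (Quaternion.mulLeftRightEquiv 1 (star p) one_ne_zero hcp)
    have he : ∀ x, e x = T x * star p := fun x =>
      congrArg (· * star p) (one_mul (T x))
    have hem : ∀ x y, e (mul x y) = star (e x) * c * e y * ((star p)⁻¹ * s * star p) :=
      fun x y => by
        simp only [he, hT', mul_assoc, mul_inv_cancel_left₀ hcp, star_mul, star_star]
    have hs' : (star p)⁻¹ * s * star p ≠ 0 := mul_ne_zero (mul_ne_zero (inv_ne_zero hcp) hs) hcp
    obtain ⟨h1, h2⟩ := Quaternion.real_of_star_mul_mul hc0 hs'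
      (identity_transport (m := fun x y => star x * c * y * ((star p)⁻¹ * s * star p)) e hem h)
    right
    refine ⟨e.trans (Quaternion.mulLeftRightEquiv _ _ hc0 hs'), fun x y => ?_⟩
    simp only [LinearEquiv.trans_apply, Quaternion.mulLeftRightEquiv_apply, hem]
    rw [h1, h2]
    simp only [Quaternion.coe_mul_eq_smul, Quaternion.mul_coe_eq_smul, smul_mul_assoc,
      mul_smul_comm, Quaternion.star_smul]
  · have hT' : ∀ x y, T (mul x y) = p * star (T x) * c * star (T y) * s := fun x y => by
      rw [hT, hf, hg, hc]; simp only [mul_assoc]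
    let e := T.trans (Quaternion.mulLeftRightEquiv (star c) 1 hcc one_ne_zero)
    have he : ∀ x, e x = star c * T x := fun x => mul_one _
    have hem : ∀ x y, e (mul x y) = star c * p * star (e x) * star (e y) * (c⁻¹ * s) :=
      fun x y => by
        simp only [he, hT', mul_assoc, mul_inv_cancel_left₀ hc0, star_mul, star_star]
    exact (Quaternion.false_of_star_mul_star (mul_ne_zero hcc hp) (mul_ne_zero (inv_ne_zero hc0) hs)
      (identity_transport (m := fun x y => star c * p * star x * star y * (c⁻¹ * s)) e hem h)).elim

/-- A 4-dimensional absolute-valued real algebra satisfies the identity `(x², x, x) = 0`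
if and only if it is isomorphic to `ℍ` or to `*ℍ` (product `x ⊙ y = x̄ * y`). -/
theorem stmt_10 {A : Type*} [NormedAddCommGroup A] [NormedSpace ℝ A]
    (mul : A →ₗ[ℝ] A →ₗ[ℝ] A)
    (habs : ∀ x y : A, ‖mul x y‖ = ‖x‖ * ‖y‖)
    (hdim : Module.finrank ℝ A = 4) :
    (∀ x : A, mul (mul (mul x x) x) x = mul (mul x x) (mul x x))
      ↔ ((∃ e : A ≃ₗ[ℝ] Quaternion ℝ, ∀ x y : A, e (mul x y) = e x * e y) ∨
          (∃ e : A ≃ₗ[ℝ] Quaternion ℝ,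
            ∀ x y : A, e (mul x y) = star (e x) * e y)) := by
  refine ⟨exists_quaternion_iso_of_identity mul habs hdim, ?_⟩
  rintro (⟨e, he⟩ | ⟨e, he⟩) x <;> apply e.injective
  · simp only [he, mul_assoc]
  · simp only [he, Quaternion.star_mul_self, Quaternion.star_coe, mul_assoc, star_mul]
    rw [← mul_assoc, ← Quaternion.coe_commutes, mul_assoc, Quaternion.star_mul_self]
end

section
/- Let A be a 4-dimensional absolute-valued real algebra. Then A satisfies the identity (x, x², x²) = 0 (i.e. (x x²) x² = x (x² x²) for all x ∈ A, where x² = xx) if and only if A is isomorphic to ℍ, to ℍ*, or to ℍ*(1,i). -/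
/-- The first imaginary unit `i` of the quaternions. -/
def quatI : Quaternion ℝ := ⟨0, 1, 0, 0⟩

open Quaternion

namespace Quaternion

/-- The quaternion with given coordinates. -/
def ofCoords (r s t u : ℝ) : ℍ[ℝ] := ⟨r, s, t, u⟩

theorem quatI_eq : quatI = ofCoords 0 1 0 0 := rfl

@[simp] theorem re_ofCoords (r s t u : ℝ) : (ofCoords r s t u).re = r := rfl
@[simp] theorem imI_ofCoords (r s t u : ℝ) : (ofCoords r s t u).imI = s := rfl
@[simp] theorem imJ_ofCoords (r s t u : ℝ) : (ofCoords r s t u).imJ = t := rfl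
@[simp] theorem imK_ofCoords (r s t u : ℝ) : (ofCoords r s t u).imK = u := rfl

theorem sum_sq_eq_one {a : ℍ[ℝ]} (ha : ‖a‖ = 1) :
    a.re ^ 2 + a.imI ^ 2 + a.imJ ^ 2 + a.imK ^ 2 = 1 := by
  rw [← normSq_def', normSq_eq_norm_mul_self, ha, one_mul]

theorem star_mul_self_of_norm_eq_one {a : ℍ[ℝ]} (ha : ‖a‖ = 1) : star a * a = 1 := by
  rw [Quaternion.star_mul_self, Quaternion.normSq_eq_norm_mul_self, ha]; simp

theorem self_mul_star_of_norm_eq_one {a : ℍ[ℝ]} (ha : ‖a‖ = 1) : a * star a = 1 := by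
  rw [Quaternion.self_mul_star, Quaternion.normSq_eq_norm_mul_self, ha]; simp

theorem star_mul_cancel_left {a : ℍ[ℝ]} (ha : ‖a‖ = 1) (x : ℍ[ℝ]) :
    star a * (a * x) = x := by
  rw [← mul_assoc, star_mul_self_of_norm_eq_one ha, one_mul]

theorem mul_star_cancel_left {a : ℍ[ℝ]} (ha : ‖a‖ = 1) (x : ℍ[ℝ]) :
    a * (star a * x) = x := by
  rw [← mul_assoc, self_mul_star_of_norm_eq_one ha, one_mul]

theorem eq_one_or_eq_neg_one_of_commute {a : ℍ[ℝ]} (ha : ‖a‖ = 1)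
    (h : ∀ u : ℍ[ℝ], u * u = -1 → star u = -u → a * u = u * a) : a = 1 ∨ a = -1 := by
  have hn := sum_sq_eq_one ha
  have hi := h (ofCoords 0 1 0 0) (by ext <;> simp) (by ext <;> simp)
  have hj := h (ofCoords 0 0 1 0) (by ext <;> simp) (by ext <;> simp)
  have h1 := congrArg (·.imK) hi
  have h2 := congrArg (·.imJ) hi
  have h3 := congrArg (·.imK) hj
  simp at h1 h2 h3
  have e1 : a.imJ = 0 := by linarith
  have e2 : a.imK = 0 := by linarith
  have e3 : a.imI = 0 := by linarith
  have : (a.re - 1) * (a.re + 1) = 0 := by rw [e1, e2, e3] at hn; linarith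
  rcases mul_eq_zero.1 this with h | h
  · left; ext <;> simp [e1, e2, e3]; linarith
  · right; ext <;> simp [e1, e2, e3]; linarith

/-- Every quaternion is conjugate by a unit to one in `ℂ = span {1, i}`. -/
theorem exists_conj_mem_complex (a : ℍ[ℝ]) :
    ∃ v : ℍ[ℝ], ‖v‖ = 1 ∧ ∃ r s : ℝ, v * a * star v = ofCoords r s 0 0 := by
  by_cases h : a.imJ = 0 ∧ a.imK = 0
  · refine ⟨1, by simp, a.re, a.imI, ?_⟩
    ext <;> simp [h.1, h.2]
  obtain ⟨n, hn0, hn⟩ : ∃ n : ℝ, 0 ≤ n ∧ n ^ 2 = a.imI ^ 2 + a.imJ ^ 2 + a.imK ^ 2 :=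
    ⟨_, Real.sqrt_nonneg _, Real.sq_sqrt (by positivity)⟩
  set w : ℍ[ℝ] := ofCoords (n + a.imI) 0 a.imK (-a.imJ) with hw
  have hw0 : w ≠ 0 := by
    intro h0
    exact h ⟨by simpa [hw] using congrArg (·.imK) h0, by simpa [hw] using congrArg (·.imJ) h0⟩
  have hwa : w * a = ofCoords a.re n 0 0 * w := by
    ext <;> simp [hw] <;> linarith
  have hw1 : ‖‖w‖⁻¹ • w‖ = 1 := by
    rw [norm_smul, norm_inv, norm_norm, inv_mul_cancel₀ (norm_ne_zero_iff.2 hw0)]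
  refine ⟨‖w‖⁻¹ • w, hw1, a.re, n, ?_⟩
  have := self_mul_star_of_norm_eq_one hw1
  calc _ = ofCoords a.re n 0 0 * ((‖w‖⁻¹ • w) * star (‖w‖⁻¹ • w)) := by
        rw [smul_mul_assoc, hwa, ← mul_assoc, mul_smul_comm]
    _ = _ := by rw [this, mul_one]

/-- The solutions of `(x, x², x²) = 0` among the products `a x y b` on `ℍ`. -/
theorem eq_of_identity_mul {a b : ℍ[ℝ]} (ha : ‖a‖ = 1) (hb : ‖b‖ = 1)
    (H : ∀ x : ℍ[ℝ], a * (a * x * (a * x * x * b) * b) * (a * x * x * b) * b =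
      a * x * (a * (a * x * x * b) * (a * x * x * b) * b) * b) :
    (a = 1 ∨ a = -1) ∧ (b = 1 ∨ b = -1) := by
  have ha0 : a ≠ 0 := by rintro rfl; simp at ha
  have hb0 : b ≠ 0 := by rintro rfl; simp at hb
  have hab : b * a = a * b := by
    apply mul_right_cancel₀ (mul_ne_zero hb0 hb0)
    simpa [mul_assoc, ha0, hb0] using H 1
  have hc : ∀ x, b * (a * x) = a * (b * x) := fun x => by rw [← mul_assoc, hab, mul_assoc]
  have ha1 : a = 1 ∨ a = -1 := by
    refine eq_one_or_eq_neg_one_of_commute ha fun u hu _ => ?_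
    have hu0 : u ≠ 0 := by rintro rfl; simp at hu
    have h2 := H u
    have hu' : ∀ x, u * (u * x) = - x := fun x => by rw [← mul_assoc, hu]; simp
    apply mul_right_cancel₀ (mul_ne_zero (mul_ne_zero ha0 ha0)
      (mul_ne_zero (mul_ne_zero hb0 hb0) (mul_ne_zero hb0 hb0)))
    simpa [mul_assoc, hu', hc, hu, ha0, hb0] using h2
  refine ⟨ha1, ?_⟩
  have h3 : ∀ x, x ≠ 0 → b * (x * x) = x * x * b := by
    intro x hx
    apply mul_right_cancel₀ (mul_ne_zero hb0 hb0)
    have := H x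
    rcases ha1 with rfl | rfl <;> simpa [mul_assoc, hx, hb0] using this
  refine eq_one_or_eq_neg_one_of_commute hb fun u hu hu' => ?_
  have h0 : 1 + u ≠ 0 := by
    intro h
    obtain rfl : u = -1 := by rw [eq_neg_iff_add_eq_zero, add_comm, h]
    have := congrArg (·.re) hu
    simp at this
    linarith
  have h4 := h3 (1 + u) h0
  have h5 : (1 + u) * (1 + u) = (2 : ℝ) • u := by
    rw [two_smul, mul_add, add_mul, add_mul, hu]; simp; abel
  rw [h5] at h4
  simpa using h4

/-- The product `a x̄ ȳ b` on `ℍ` never satisfies `(x, x², x²) = 0`. -/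
theorem not_identity_star_mul_star {a b : ℍ[ℝ]} (ha : ‖a‖ = 1) (hb : ‖b‖ = 1)
    (H : ∀ x : ℍ[ℝ], a * star (a * star x * star (a * star x * star x * b) * b) *
        star (a * star x * star x * b) * b =
      a * star x * star (a * star (a * star x * star x * b) *
        star (a * star x * star x * b) * b) * b) :
    False := by
  have ha0 : a ≠ 0 := by rintro rfl; simp at ha
  have hb0 : b ≠ 0 := by rintro rfl; simp at hb
  have hab : star a * star b = a * b := by
    apply mul_right_cancel₀ (mul_ne_zero (star_ne_zero.2 ha0) hb0)
    simpa [mul_assoc, ha0, hb0] using H 1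
  have hu : ∀ u : ℍ[ℝ], u * u = -1 → star u = -u →
      star b * (a * b) * u = - (u * (star b * (a * b))) := by
    intro u hu hu'
    have hu0 : u ≠ 0 := by rintro rfl; simp at hu
    have hc : ∀ x, star a * (star b * x) = a * (b * x) := fun x => by
      rw [← mul_assoc, hab, mul_assoc]
    have hab' : star b * star a = b * a := by simpa using (congrArg star hab).symm
    have hc' : ∀ x, star b * (star a * x) = b * (a * x) := fun x => by
      rw [← mul_assoc, hab', mul_assoc]
    apply mul_left_cancel₀ ha0
    apply mul_right_cancel₀ (mul_ne_zero ha0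
      (mul_ne_zero hb0 (mul_ne_zero (star_ne_zero.2 ha0) hb0)))
    have h := H u
    simp only [mul_assoc, star_mul, star_star, star_neg, neg_mul, mul_neg, neg_neg, hu', hc,
      hu, mul_one] at h
    simpa [mul_assoc, hc'] using h
  refine mul_ne_zero (star_ne_zero.2 hb0) (mul_ne_zero ha0 hb0) ?_
  generalize star b * (a * b) = w at hu
  have hi := hu (ofCoords 0 1 0 0) (by ext <;> simp) (by ext <;> simp)
  have hj := hu (ofCoords 0 0 1 0) (by ext <;> simp) (by ext <;> simp)
  have h0 := congrArg (·.re) hi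
  have h1 := congrArg (·.imI) hi
  have h2 := congrArg (·.re) hj
  have hk := hu (ofCoords 0 0 0 1) (by ext <;> simp) (by ext <;> simp)
  have h3 := congrArg (·.re) hk
  simp at h0 h1 h2 h3
  ext <;> simp <;> linarith

theorem re_eq_zero_and_imI_eq_zero_of_system {p q β γ : ℝ} (hg : γ ≠ 0)
    (han : p ^ 2 + q ^ 2 = 1) (hbn : β ^ 2 + γ ^ 2 = 1)
    (h1 : (p ^ 2 + q ^ 2) * (β ^ 2 + γ ^ 2) * (β ^ 2 - γ ^ 2)
      - 2 * (p ^ 2 + q ^ 2) * (β ^ 2 + γ ^ 2) ^ 2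
      - (β ^ 2 + γ ^ 2) * ((p ^ 2 - q ^ 2) * (β ^ 2 - γ ^ 2) - 2 * p * q * (2 * β * γ))
      + ((p ^ 2 - q ^ 2) * ((β ^ 2 - γ ^ 2) ^ 2 - (2 * β * γ) ^ 2)
        - 2 * p * q * (2 * (β ^ 2 - γ ^ 2) * (2 * β * γ)))
      + (p ^ 2 - q ^ 2) * (β ^ 2 + γ ^ 2) ^ 2 = 0)
    (h2 : (p ^ 2 + q ^ 2) * (β ^ 2 + γ ^ 2) * (2 * β * γ)
      - (β ^ 2 + γ ^ 2) * ((p ^ 2 - q ^ 2) * (2 * β * γ) + 2 * p * q * (β ^ 2 - γ ^ 2))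
      + ((p ^ 2 - q ^ 2) * (2 * (β ^ 2 - γ ^ 2) * (2 * β * γ))
        + 2 * p * q * ((β ^ 2 - γ ^ 2) ^ 2 - (2 * β * γ) ^ 2))
      + 2 * p * q * (β ^ 2 + γ ^ 2) ^ 2 = 0) :
    β = 0 ∧ q = 0 := by
  rw [hbn, han] at h1
  rw [hbn, han] at h2
  have hSD : (β ^ 2 - γ ^ 2) ^ 2 + (2 * β * γ) ^ 2 = 1 := by
    linear_combination (β ^ 2 + γ ^ 2 + 1) * hbn
  have hPQ : (p ^ 2 - q ^ 2) ^ 2 + (2 * p * q) ^ 2 = 1 := by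
    linear_combination (p ^ 2 + q ^ 2 + 1) * han
  have hβ : β = 0 := by
    have : (2 * β * γ) ^ 2 = 0 := by
      generalize β ^ 2 - γ ^ 2 = S at *
      generalize 2 * β * γ = D at *
      generalize p ^ 2 - q ^ 2 = P at *
      generalize 2 * p * q = Q at *
      have h1' : P * (S - (S ^ 2 - D ^ 2) - 1) - Q * (D - 2 * S * D) = S - 2 := by
        linear_combination -h1
      have h2' : Q * (S - (S ^ 2 - D ^ 2) - 1) + P * (D - 2 * S * D) = D := by
        linear_combination -h2
      have h3 : (S - (S ^ 2 - D ^ 2) - 1) ^ 2 + (D - 2 * S * D) ^ 2 = (S - 2) ^ 2 + D ^ 2 := by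
        linear_combination
          (-((S - (S ^ 2 - D ^ 2) - 1) ^ 2 + (D - 2 * S * D) ^ 2)) * hPQ
          + (P * (S - (S ^ 2 - D ^ 2) - 1) - Q * (D - 2 * S * D) + (S - 2)) * h1'
          + (Q * (S - (S ^ 2 - D ^ 2) - 1) + P * (D - 2 * S * D) + D) * h2'
      grind
    simpa [hg] using this
  refine ⟨hβ, ?_⟩
  subst hβ
  have h4 : γ ^ 2 = 1 := by linarith
  have h5 : γ ^ 4 = 1 := by linear_combination (γ ^ 2 + 1) * h4
  have : q ^ 2 = 0 := by
    ring_nf at h1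
    rw [h5, h4] at h1
    linarith
  simpa using this

/-- The first-order part in `t` of the `j`- and `k`-coordinates of the identity at `1 + t j`. -/
theorem system_of_identity {p q β γ : ℝ} {a b : ℍ[ℝ]} (ha : a = ofCoords p q 0 0)
    (hb : b = ofCoords β γ 0 0)
    (E : ∀ x : ℍ[ℝ], a * x * b * x * star b * star x * star a * b * x * star b * star x =
      x * b * a * x * b * star x * star b * x * star b * star x * star a) :
    ((p ^ 2 + q ^ 2) * (β ^ 2 + γ ^ 2) * (β ^ 2 - γ ^ 2)
      - 2 * (p ^ 2 + q ^ 2) * (β ^ 2 + γ ^ 2) ^ 2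
      - (β ^ 2 + γ ^ 2) * ((p ^ 2 - q ^ 2) * (β ^ 2 - γ ^ 2) - 2 * p * q * (2 * β * γ))
      + ((p ^ 2 - q ^ 2) * ((β ^ 2 - γ ^ 2) ^ 2 - (2 * β * γ) ^ 2)
        - 2 * p * q * (2 * (β ^ 2 - γ ^ 2) * (2 * β * γ)))
      + (p ^ 2 - q ^ 2) * (β ^ 2 + γ ^ 2) ^ 2 = 0) ∧
    ((p ^ 2 + q ^ 2) * (β ^ 2 + γ ^ 2) * (2 * β * γ)
      - (β ^ 2 + γ ^ 2) * ((p ^ 2 - q ^ 2) * (2 * β * γ) + 2 * p * q * (β ^ 2 - γ ^ 2))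
      + ((p ^ 2 - q ^ 2) * (2 * (β ^ 2 - γ ^ 2) * (2 * β * γ))
        + 2 * p * q * ((β ^ 2 - γ ^ 2) ^ 2 - (2 * β * γ) ^ 2))
      + 2 * p * q * (β ^ 2 + γ ^ 2) ^ 2 = 0) := by
  subst ha hb
  have hJ : ∀ t : ℝ, _ := fun t => congrArg (·.imJ) (E (ofCoords 1 0 t 0))
  have hK : ∀ t : ℝ, _ := fun t => congrArg (·.imK) (E (ofCoords 1 0 t 0))
  have h5J := congrArg (·.imJ) (E (ofCoords 0 0 1 0))
  have h5K := congrArg (·.imK) (E (ofCoords 0 0 1 0))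
  simp at hJ hK h5J h5K
  constructor
  · linear_combination (2 / 3) * hJ 1 - (2 / 3) * hJ (-1) - (1 / 12) * hJ 2 + (1 / 12) * hJ (-2)
      + 4 * h5J
  · linear_combination (2 / 3) * hK 1 - (2 / 3) * hK (-1) - (1 / 12) * hK 2 + (1 / 12) * hK (-2)
      + 4 * h5K

/-- The solutions of `(x, x², x²) = 0` among the products `a x b ȳ` on `ℍ`, `b ∈ ℂ`. -/
theorem eq_of_identity_mul_star {a b : ℍ[ℝ]} (ha : ‖a‖ = 1) (hb : ‖b‖ = 1)
    (hbJ : b.imJ = 0) (hbK : b.imK = 0)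
    (H : ∀ x : ℍ[ℝ], a * (a * x * b * star (a * x * b * star x)) * b * star (a * x * b * star x) =
      a * x * b * star (a * (a * x * b * star x) * b * star (a * x * b * star x))) :
    (a = 1 ∨ a = -1) ∧ ((b = 1 ∨ b = -1) ∨ b = quatI ∨ b = -quatI) := by
  have ha0 : a ≠ 0 := by rintro rfl; simp at ha
  have hb0 : b ≠ 0 := by rintro rfl; simp at hb
  have E : ∀ x : ℍ[ℝ], a * x * b * x * star b * star x * star a * b * x * star b * star x =
      x * b * a * x * b * star x * star b * x * star b * star x * star a := by
    intro x
    apply mul_right_cancel₀ (star_ne_zero.2 ha0)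
    apply mul_left_cancel₀ ha0
    simpa [mul_assoc] using H x
  have hbn := sum_sq_eq_one hb
  have han := sum_sq_eq_one ha
  simp only [hbJ, hbK] at hbn
  have sa := star_mul_self_of_norm_eq_one ha
  have sb := star_mul_self_of_norm_eq_one hb
  have sb' := self_mul_star_of_norm_eq_one hb
  have sb'' := mul_star_cancel_left hb
  by_cases hg : b.imI = 0
  · have hb1 : b = 1 ∨ b = -1 := by
      have : (b.re - 1) * (b.re + 1) = 0 := by rw [hg] at hbn; linarith
      rcases mul_eq_zero.1 this with h | h
      · left; ext <;> simp [hbJ, hbK, hg]; linarith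
      · right; ext <;> simp [hbJ, hbK, hg]; linarith
    refine ⟨eq_one_or_eq_neg_one_of_commute ha fun u hu hu' => ?_, Or.inl hb1⟩
    have huu : ∀ x, u * (u * x) = - x := fun x => by rw [← mul_assoc, hu]; simp
    apply mul_right_cancel₀ (star_ne_zero.2 ha0)
    have := E u
    rcases hb1 with rfl | rfl <;> simpa [mul_assoc, hu, hu', huu] using this
  have hab : a * b = b * a := by
    have h1 := E 1
    have h2 : b * a * star b * star a = 1 := by
      simpa [mul_assoc, sb, sb', sb'', self_mul_star_of_norm_eq_one ha] using h1.symm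
    calc a * b = (b * a * star b * star a) * (a * b) := by rw [h2, one_mul]
      _ = b * a := by
        simp [mul_assoc, star_mul_cancel_left ha, sb]
  have haJ : a.imJ = 0 := by
    have := congrArg (·.imK) hab
    simp [hbJ, hbK] at this
    have : b.imI * a.imJ = 0 := by linarith
    simpa [hg] using this
  have haK : a.imK = 0 := by
    have := congrArg (·.imJ) hab
    simp [hbJ, hbK] at this
    have : b.imI * a.imK = 0 := by linarith
    simpa [hg] using this
  simp only [haJ, haK] at han
  obtain ⟨h1, h2⟩ := system_of_identity (p := a.re) (q := a.imI) (β := b.re) (γ := b.imI)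
    (by ext <;> simp [haJ, haK]) (by ext <;> simp [hbJ, hbK]) E
  simp only [ne_eq, OfNat.ofNat_ne_zero, not_false_eq_true, zero_pow, add_zero] at han hbn
  obtain ⟨hβ, hq⟩ := re_eq_zero_and_imI_eq_zero_of_system hg han hbn h1 h2
  rw [hβ] at hbn
  rw [hq] at han
  have hγ : (b.imI - 1) * (b.imI + 1) = 0 := by linear_combination hbn
  have hp : (a.re - 1) * (a.re + 1) = 0 := by linear_combination han
  constructor
  · rcases mul_eq_zero.1 hp with h | h
    · left; ext <;> simp [hq, haJ, haK]; linarith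
    · right; ext <;> simp [hq, haJ, haK]; linarith
  · right
    rcases mul_eq_zero.1 hγ with h | h
    · left; ext <;> simp [quatI_eq, hβ, hbJ, hbK]; linarith
    · right; ext <;> simp [quatI_eq, hβ, hbJ, hbK]; linarith

/-- The product `x̄ a y b` on `ℍ` never satisfies `(x, x², x²) = 0`. -/
theorem not_identity_star_mul {a b : ℍ[ℝ]} (ha : ‖a‖ = 1) (hb : ‖b‖ = 1)
    (haJ : a.imJ = 0) (haK : a.imK = 0)
    (H : ∀ x : ℍ[ℝ], star (star x * a * (star x * a * x * b) * b) * a * (star x * a * x * b) * b =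
      star x * a * (star (star x * a * x * b) * a * (star x * a * x * b) * b) * b) : False := by
  have hb0 : b ≠ 0 := by rintro rfl; simp at hb
  have E : ∀ x : ℍ[ℝ], star b * (star b * (star x * (star a * (x * (star a * (x * (a * (star x *
      (a * x))))))))) = star x * (a * (star b * (star x * (star a * (x * (a * (star x *
      (a * (x * b))))))))) := by
    intro x
    apply mul_right_cancel₀ (mul_ne_zero hb0 hb0)
    have := H x
    simpa [mul_assoc] using this
  have sa := star_mul_self_of_norm_eq_one ha
  have sa' := star_mul_cancel_left ha
  have hbn := sum_sq_eq_one hb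
  have han := sum_sq_eq_one ha
  have h1 : star b * star b = a * (star b * (a * b)) := by
    simpa [sa, sa'] using E 1
  have hi : star b * star b * ofCoords 0 1 0 0 = -(ofCoords 0 1 0 0 * (star b * star b)) := by
    have hu : ofCoords 0 1 0 0 * ofCoords 0 1 0 0 = -1 := by ext <;> simp
    have hu' : star (ofCoords 0 1 0 0) = -ofCoords 0 1 0 0 := by ext <;> simp
    have hc : a * ofCoords 0 1 0 0 = ofCoords 0 1 0 0 * a := by ext <;> simp [haJ, haK]
    have hc' : star a * ofCoords 0 1 0 0 = ofCoords 0 1 0 0 * star a := by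
      ext <;> simp [haJ, haK]
    have h := E (ofCoords 0 1 0 0)
    generalize ofCoords 0 1 0 0 = u at *
    have huu : ∀ x, u * (u * x) = - x := fun x => by rw [← mul_assoc, hu]; simp
    have hcx : ∀ x, a * (u * x) = u * (a * x) := fun x => by rw [← mul_assoc, hc, mul_assoc]
    have hcx' : ∀ x, star a * (u * x) = u * (star a * x) := fun x => by
      rw [← mul_assoc, hc', mul_assoc]
    rw [mul_assoc]
    conv_rhs => rw [h1]
    simpa [hu', huu, hu, hc, hc', hcx, hcx', sa, sa'] using h
  have hi0 := congrArg (·.re) hi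
  have hi1 := congrArg (·.imI) hi
  have h10 := congrArg (·.re) h1
  simp [haJ, haK] at hi0 hi1 h10
  have hbI : b.imI = 0 := by
    have h2 : b.re ^ 2 = 1 / 2 := by linarith
    have : b.re ≠ 0 := by intro h; rw [h] at h2; norm_num at h2
    have h3 : b.re * b.imI = 0 := by linarith
    simpa [this] using h3
  have hare : a.re = 0 := by
    rw [hbI] at hbn h10 hi1
    rw [haJ, haK] at han
    have : a.re ^ 2 = 0 := by grind
    simpa using this
  have hst : star a = -a := by ext <;> simp [hare]
  rw [hst] at sa sa'
  have anti : ∀ u : ℍ[ℝ], u * u = -1 → star u = -u → u * a = - (a * u) →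
      star b * star b * u = -(u * (star b * star b)) := by
    intro u hu hu' hc
    have huu : ∀ x, u * (u * x) = - x := fun x => by rw [← mul_assoc, hu]; simp
    have hcx : ∀ x, u * (a * x) = -(a * (u * x)) := fun x => by
      rw [← mul_assoc, hc, neg_mul, mul_assoc]
    have haa : a * a = -1 := by simpa [neg_eq_iff_eq_neg] using sa
    have haa' : ∀ x, a * (a * x) = -x := fun x => by simpa [neg_eq_iff_eq_neg] using sa' x
    have h := E u
    simp only [hst, hu', mul_neg, neg_mul, neg_neg, huu, hu, hcx, haa, haa', mul_one] at h
    rw [mul_assoc]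
    conv_rhs => rw [h1]
    simpa [huu, hu, hcx, hc, haa, haa'] using h
  have hj := anti (ofCoords 0 0 1 0) (by ext <;> simp) (by ext <;> simp)
    (by ext <;> simp [haJ, haK, hare])
  have hk := anti (ofCoords 0 0 0 1) (by ext <;> simp) (by ext <;> simp)
    (by ext <;> simp [haJ, haK, hare])
  have hj0 := congrArg (·.re) hj
  have hk0 := congrArg (·.re) hk
  simp [hbI] at hj0 hk0
  grind

/-- Every linear isometry of `ℍ` is `x ↦ p x q` or `x ↦ p x̄ q` with unit quaternions `p`, `q`. -/
theorem linearIsometryEquiv_eq_mul_mul (f : ℍ[ℝ] ≃ₗᵢ[ℝ] ℍ[ℝ]) :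
    ∃ p q : ℍ[ℝ], ‖p‖ = 1 ∧ ‖q‖ = 1 ∧
      ((∀ x, f x = p * x * q) ∨ (∀ x, f x = p * star x * q)) := by
  obtain ⟨l, -, rfl⟩ := f.reflections_generate_dim
  induction l with
  | nil => exact ⟨1, 1, by simp, by simp, Or.inl fun x => by simp⟩
  | cons v l ih =>
    obtain ⟨p, q, hp, hq, h⟩ := ih
    rcases eq_or_ne v 0 with rfl | hv
    · refine ⟨p, q, hp, hq, ?_⟩
      have h0 : ∀ y : ℍ[ℝ], (Submodule.span ℝ {(0 : ℍ[ℝ])})ᗮ.reflection y = y := fun y =>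
        Submodule.reflection_mem_subspace_eq_self (by simp)
      simpa only [List.map_cons, List.prod_cons, LinearIsometryEquiv.coe_mul,
        Function.comp_apply, h0] using h
    set w : ℍ[ℝ] := ‖v‖⁻¹ • v with hw
    have hv0 : ‖v‖ ≠ 0 := norm_ne_zero_iff.2 hv
    have hw1 : ‖w‖ = 1 := by
      rw [hw, norm_smul, norm_inv, norm_norm, inv_mul_cancel₀ hv0]
    have hspan : Submodule.span ℝ {v} = Submodule.span ℝ {w} :=
      (Submodule.span_singleton_smul_eq (IsUnit.mk0 _ (inv_ne_zero hv0)) v).symm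
    have hr : ∀ x, (Submodule.span ℝ {v})ᗮ.reflection x = -w * star x * w := by
      intro x
      have hn := sum_sq_eq_one hw1
      rw [Submodule.reflection_orthogonal_apply]
      simp only [hspan]
      rw [Submodule.reflection_singleton_apply, hw1, inner_def, two_smul]
      clear h hw hspan
      clear_value w
      ext <;> simp <;> grind
    rcases h with h | h
    · refine ⟨-w * star q, star p * w, by simp [hw1, hq], by simp [hw1, hp], Or.inr fun x => ?_⟩
      simp only [List.map_cons, List.prod_cons, LinearIsometryEquiv.coe_mul, Function.comp_apply,
        h, hr]
      simp [mul_assoc]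
    · refine ⟨-w * star q, star p * w, by simp [hw1, hq], by simp [hw1, hp], Or.inl fun x => ?_⟩
      simp only [List.map_cons, List.prod_cons, LinearIsometryEquiv.coe_mul, Function.comp_apply,
        h, hr]
      simp [mul_assoc]

end Quaternion

section Euclidean

open MeasureTheory Module

variable {A : Type*} [NormedAddCommGroup A] [NormedSpace ℝ A]

/-- Linear isometries preserve every additive Haar measure. -/
theorem LinearIsometryEquiv.measurePreserving_addHaar [FiniteDimensional ℝ A] [MeasurableSpace A]
    [BorelSpace A] (μ : Measure A) [μ.IsAddHaarMeasure] (g : A ≃ₗᵢ[ℝ] A) :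
    MeasurePreserving g μ μ := by
  refine ⟨g.continuous.measurable, ?_⟩
  have hdet : LinearMap.det (g.toLinearEquiv : A →ₗ[ℝ] A) ≠ 0 :=
    (LinearEquiv.isUnit_det' g.toLinearEquiv).ne_zero
  have h := Measure.map_linearMap_addHaar_eq_smul_addHaar μ hdet
  have h' : Measure.map g μ = ENNReal.ofReal
    |(LinearMap.det (g.toLinearEquiv : A →ₗ[ℝ] A))⁻¹| • μ := h
  have hball : μ (Metric.closedBall 0 1) = ENNReal.ofReal
      |(LinearMap.det (g.toLinearEquiv : A →ₗ[ℝ] A))⁻¹| * μ (Metric.closedBall 0 1) := by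
    have := congrArg (fun ν => ν (Metric.closedBall (0 : A) 1)) h'
    simp only [Measure.smul_apply, smul_eq_mul] at this
    rw [← this, Measure.map_apply g.continuous.measurable measurableSet_closedBall]
    simp
  have h1 : ENNReal.ofReal |(LinearMap.det (g.toLinearEquiv : A →ₗ[ℝ] A))⁻¹| = 1 := by
    have hpos : μ (Metric.closedBall (0 : A) 1) ≠ 0 :=
      (Metric.measure_closedBall_pos μ 0 one_pos).ne'
    have hfin : μ (Metric.closedBall (0 : A) 1) ≠ ⊤ := measure_closedBall_lt_top.ne
    exact (ENNReal.mul_eq_right hpos hfin).1 hball.symm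
  rw [h', h1, one_smul]

/-- The inertia map `f ↦ ∫ f(x) x dx` over the unit ball is a positive definite isomorphism from
the dual, equivariant under linear isometries. -/
theorem exists_equivariant_equiv_dual [FiniteDimensional ℝ A] :
    ∃ T : (A →L[ℝ] ℝ) ≃ₗ[ℝ] A, (∀ f : A →L[ℝ] ℝ, f ≠ 0 → 0 < f (T f)) ∧
      ∀ (g : A ≃ₗᵢ[ℝ] A) (f : A →L[ℝ] ℝ), g (T (f.comp (g : A →L[ℝ] A))) = T f := by
  let : MeasurableSpace A := borel A
  have : BorelSpace A := ⟨rfl⟩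
  have : CompleteSpace A := FiniteDimensional.complete ℝ A
  have : ProperSpace A := FiniteDimensional.proper ℝ A
  let μ : Measure A := Measure.addHaar
  let K : Set A := Metric.closedBall 0 1
  have hint : ∀ f : A →L[ℝ] ℝ, IntegrableOn (fun x => f x • x) K μ := fun f =>
    (Continuous.continuousOn (by fun_prop)).integrableOn_compact (isCompact_closedBall 0 1)
  let T₀ : (A →L[ℝ] ℝ) →ₗ[ℝ] A :=
    { toFun := fun f => ∫ x in K, f x • x ∂μ
      map_add' := fun f f' => by
        simp only [add_apply, add_smul]
        exact integral_add (hint f) (hint f')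
      map_smul' := fun c f => by
        simp only [smul_apply, smul_eq_mul, mul_smul, RingHom.id_apply]
        exact integral_smul c _ }
  have hT₀ : ∀ f, T₀ f = ∫ x in K, f x • x ∂μ := fun _ => rfl
  have hpos : ∀ f : A →L[ℝ] ℝ, f ≠ 0 → 0 < f (T₀ f) := by
    intro f hf
    rw [hT₀, ← f.integral_comp_comm (hint f)]
    have hc : Continuous fun x => f (f x • x) := by fun_prop
    have hnn : ∀ x, 0 ≤ f (f x • x) := fun x => by
      rw [map_smul, smul_eq_mul]; exact mul_self_nonneg _
    rw [setIntegral_pos_iff_support_of_nonneg_ae (Filter.Eventually.of_forall hnn)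
      (hc.continuousOn.integrableOn_compact (isCompact_closedBall 0 1))]
    have hopen : IsOpen ((Function.support fun x => f (f x • x)) ∩ Metric.ball (0 : A) 1) :=
      hc.isOpen_support.inter Metric.isOpen_ball
    refine lt_of_lt_of_le (hopen.measure_pos μ ?_)
      (measure_mono (Set.inter_subset_inter_right _ Metric.ball_subset_closedBall))
    obtain ⟨x, hx⟩ : ∃ x, f x ≠ 0 := by
      by_contra! h
      exact hf (by ext x; simpa using h x)
    have hx0 : 0 < ‖x‖ := norm_pos_iff.2 (by rintro rfl; simp at hx)
    refine ⟨(2 * ‖x‖)⁻¹ • x, ?_, ?_⟩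
    · simp [hx, hx0.ne']
    · rw [mem_ball_zero_iff, norm_smul, norm_inv, norm_mul, norm_norm, mul_inv, mul_assoc,
        inv_mul_cancel₀ hx0.ne']
      norm_num
  have hinj : Function.Injective T₀ := by
    rw [injective_iff_map_eq_zero]
    intro f hf
    by_contra h
    simpa [hf] using hpos f h
  have hdim : finrank ℝ (A →L[ℝ] ℝ) = finrank ℝ A := by
    rw [← (LinearMap.toContinuousLinearMap (𝕜 := ℝ) (E := A) (F' := ℝ)).finrank_eq]
    exact Subspace.dual_finrank_eq
  refine ⟨T₀.linearEquivOfInjective hinj hdim, fun f hf => hpos f hf, fun g f => ?_⟩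
  change g (T₀ _) = T₀ f
  rw [hT₀, hT₀]
  have h1 : g (∫ x in K, (f.comp (g : A →L[ℝ] A)) x • x ∂μ) = ∫ x in K, f (g x) • g x ∂μ := by
    refine ((g : A →L[ℝ] A).integral_comp_comm (hint (f.comp (g : A →L[ℝ] A)))).symm.trans ?_
    simp
  rw [h1]
  have hK : g ⁻¹' K = K := by simp [K]
  have h2 := (g.measurePreserving_addHaar μ).setIntegral_preimage_emb
    g.toHomeomorph.measurableEmbedding (fun x => f x • x) K
  rw [hK] at h2
  exact h2

/-- A finite-dimensional normed space whose linear isometries act transitively on the unit sphere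
is Euclidean. -/
theorem InnerProductSpaceable.of_transitive [FiniteDimensional ℝ A]
    (h : ∀ x y : A, ‖x‖ = 1 → ‖y‖ = 1 → ∃ g : A ≃ₗᵢ[ℝ] A, g x = y) :
    InnerProductSpaceable A := by
  obtain ⟨T, hpos, hT⟩ := exists_equivariant_equiv_dual (A := A)
  rcases subsingleton_or_nontrivial A with hA | hA
  · exact ⟨fun x y => by simp [Subsingleton.elim x 0, Subsingleton.elim y 0]⟩
  obtain ⟨e, he⟩ := exists_norm_eq A (zero_le_one)
  have hinv : ∀ (g : A ≃ₗᵢ[ℝ] A) x, T.symm (g x) (g x) = T.symm x x := by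
    intro g x
    have h1 := hT g (T.symm (g x))
    rw [T.apply_symm_apply] at h1
    have h2 : (T.symm (g x)).comp (g : A →L[ℝ] A) = T.symm x := by
      rw [LinearEquiv.eq_symm_apply]; exact g.injective h1
    rw [← h2]; rfl
  have hq : ∀ x, T.symm x x = T.symm e e * (‖x‖ * ‖x‖) := by
    intro x
    rcases eq_or_ne x 0 with rfl | hx
    · simp
    have hx0 : ‖x‖ ≠ 0 := norm_ne_zero_iff.2 hx
    obtain ⟨g, hg⟩ := h e (‖x‖⁻¹ • x) he (by
      rw [norm_smul, norm_inv, norm_norm, inv_mul_cancel₀ hx0])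
    have h1 := hinv g e
    rw [hg] at h1
    simp only [map_smul, smul_apply, smul_eq_mul] at h1
    rw [← h1]
    field_simp
  have hc : 0 < T.symm e e := by
    have := hpos (T.symm e) (by simpa using (norm_ne_zero_iff.1 (by simp [he] : ‖e‖ ≠ 0)))
    simpa using this
  refine ⟨fun x y => mul_left_cancel₀ hc.ne' ?_⟩
  rw [mul_add, ← hq, ← hq]
  have e1 := hq x
  have e2 := hq y
  simp only [map_add, map_sub, add_apply, sub_apply]
  linear_combination 2 * e1 + 2 * e2

end Euclidean

section Hurwitz

open Module
open scoped InnerProductSpace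

variable {A : Type*} [NormedAddCommGroup A] [InnerProductSpace ℝ A]

/-- Polarisation of `‖xy‖ = ‖x‖‖y‖` in both factors. -/
theorem inner_mul_add_inner_mul {n : A →ₗ[ℝ] A →ₗ[ℝ] A} (hn : ∀ x y, ‖n x y‖ = ‖x‖ * ‖y‖)
    (x y z w : A) :
    ⟪n x y, n z w⟫_ℝ + ⟪n x w, n z y⟫_ℝ = 2 * ⟪x, z⟫_ℝ * ⟪y, w⟫_ℝ := by
  have hN : ∀ x y, ⟪n x y, n x y⟫_ℝ = ⟪x, x⟫_ℝ * ⟪y, y⟫_ℝ := fun x y => by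
    simp only [real_inner_self_eq_norm_sq, hn, mul_pow]
  have hR : ∀ x y w, ⟪n x y, n x w⟫_ℝ = ⟪x, x⟫_ℝ * ⟪y, w⟫_ℝ := fun x y w => by
    have h := hN x (y + w)
    simp only [map_add, inner_add_left, inner_add_right, hN] at h
    rw [real_inner_comm (n x y) (n x w), real_inner_comm y w] at h
    linarith
  have h := hR (x + z) y w
  simp only [map_add, LinearMap.add_apply, inner_add_left, inner_add_right, hR] at h
  rw [real_inner_comm (n x w) (n z y), real_inner_comm x z] at h
  linarith

/-- A four-dimensional unital absolute-valued algebra over a Euclidean space is isometrically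
isomorphic to `ℍ`. -/
theorem exists_equiv_quaternion_of_unit {n : A →ₗ[ℝ] A →ₗ[ℝ] A}
    (hn : ∀ x y, ‖n x y‖ = ‖x‖ * ‖y‖) (hdim : finrank ℝ A = 4) {o : A} (ho : ‖o‖ = 1)
    (hl : ∀ x, n o x = x) (hr : ∀ x, n x o = x) :
    ∃ ψ : A ≃ₗᵢ[ℝ] ℍ[ℝ], ∀ x y, ψ (n x y) = ψ x * ψ y := by
  have : FiniteDimensional ℝ A := FiniteDimensional.of_finrank_pos (by omega)
  have hp := inner_mul_add_inner_mul hn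
  have hadjl : ∀ u, ⟪u, o⟫_ℝ = 0 → ∀ x w, ⟪n u x, w⟫_ℝ = -⟪x, n u w⟫_ℝ := fun u hu x w => by
    have h := hp u x o w
    rw [hl, hl, hu, real_inner_comm] at h
    rw [real_inner_comm x, real_inner_comm w] at *
    linarith
  have hadjr : ∀ u, ⟪u, o⟫_ℝ = 0 → ∀ x w, ⟪n x u, w⟫_ℝ = -⟪x, n w u⟫_ℝ := fun u hu x w => by
    have h := hp x u w o
    rw [hr, hr, hu] at h
    linarith
  have hsqN : ∀ x y w, ⟪n x y, n x w⟫_ℝ = ⟪x, x⟫_ℝ * ⟪y, w⟫_ℝ := fun x y w => by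
    have h := hp x y x w
    rw [real_inner_comm (n x y) (n x w)] at h
    linarith
  have hsqN' : ∀ x y w, ⟪n y x, n w x⟫_ℝ = ⟪x, x⟫_ℝ * ⟪y, w⟫_ℝ := fun x y w => by
    have h := hp y x w x
    linarith
  have hL' : ∀ u, ⟪u, o⟫_ℝ = 0 → ∀ x, n u (n u x) = -(⟪u, u⟫_ℝ • x) := fun u hu x => by
    refine ext_inner_right ℝ fun w => ?_
    rw [hadjl u hu, hsqN, inner_neg_left, real_inner_smul_left]
  have hL : ∀ u, ‖u‖ = 1 → ⟪u, o⟫_ℝ = 0 → ∀ x, n u (n u x) = -x := fun u hu1 hu x => by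
    rw [hL' u hu, real_inner_self_eq_norm_sq, hu1, one_pow, one_smul]
  have hR : ∀ u, ‖u‖ = 1 → ⟪u, o⟫_ℝ = 0 → ∀ x, n (n x u) u = -x := fun u hu1 hu x => by
    refine ext_inner_right ℝ fun w => ?_
    rw [hadjr u hu, hsqN', real_inner_self_eq_norm_sq, hu1, inner_neg_left]
    ring
  have hex : ∀ s : Finset A, s.card < 4 → ∃ v : A, ‖v‖ = 1 ∧ ∀ w ∈ s, ⟪v, w⟫_ℝ = 0 := by
    intro s hs
    have hne : (Submodule.span ℝ (s : Set A))ᗮ ≠ ⊥ := by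
      rw [Ne, Submodule.orthogonal_eq_bot_iff]
      intro h
      have h1 := finrank_span_finset_le_card (R := ℝ) s
      rw [Set.finrank, h, finrank_top] at h1
      omega
    obtain ⟨v, hv, hv0⟩ := Submodule.exists_mem_ne_zero_of_ne_bot hne
    refine ⟨‖v‖⁻¹ • v, ?_, fun w hw => ?_⟩
    · rw [norm_smul, norm_inv, norm_norm, inv_mul_cancel₀ (norm_ne_zero_iff.2 hv0)]
    · rw [real_inner_smul_left,
        Submodule.inner_left_of_mem_orthogonal (Submodule.subset_span hw) hv, mul_zero]
  classical
  obtain ⟨i, hi, hio⟩ := hex {o} (by simp)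
  obtain ⟨j, hj, hjoi⟩ := hex {o, i} (by have := Finset.card_le_two (a := o) (b := i); omega)
  replace hio : ⟪i, o⟫_ℝ = 0 := hio o (by simp)
  have hjo : ⟪j, o⟫_ℝ = 0 := hjoi o (by simp)
  have hji : ⟪j, i⟫_ℝ = 0 := hjoi i (by simp)
  obtain ⟨k, hk⟩ : ∃ k, n i j = k := ⟨_, rfl⟩
  have hk1 : ‖k‖ = 1 := by rw [← hk, hn, hi, hj, one_mul]
  have hko : ⟪k, o⟫_ℝ = 0 := by rw [← hk, hadjl i hio, hr, hji, neg_zero]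
  have hki : ⟪k, i⟫_ℝ = 0 := by
    have h := hsqN i j o
    rwa [hk, hr, hjo, mul_zero] at h
  have hkj : ⟪k, j⟫_ℝ = 0 := by
    have h := hsqN' j i o
    rwa [hk, hl, hio, mul_zero] at h
  have hii : n i i = -o := by simpa [hr] using hL i hi hio o
  have hjj : n j j = -o := by simpa [hr] using hL j hj hjo o
  have hkk : n k k = -o := by simpa [hr] using hL k hk1 hko o
  have hjik : n j i = -k := by
    have h := hL' (i + j) (by rw [inner_add_left, hio, hjo, add_zero]) o
    have hN : ⟪i + j, i + j⟫_ℝ = 2 := by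
      rw [real_inner_add_add_self, real_inner_self_eq_norm_sq, real_inner_self_eq_norm_sq, hi, hj,
        real_inner_comm, hji]
      norm_num
    rw [hr, hN, two_smul] at h
    simp only [map_add, LinearMap.add_apply, hii, hjj, hk] at h
    have h0 : n j i + k = 0 := by
      rw [← sub_eq_zero] at h
      rw [← h]
      abel
    exact eq_neg_of_add_eq_zero_left h0
  have hik : n i k = -j := by rw [← hk, hL i hi hio]
  have hkj' : n k j = -i := by rw [← hk, hR j hj hjo]
  have hjk : n j k = i := by
    have h := hL j hj hjo i
    rw [hjik, map_neg, neg_inj] at h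
    exact h
  have hki' : n k i = j := by
    have h := hR i hi hio j
    rw [hjik, map_neg, LinearMap.neg_apply, neg_inj] at h
    exact h
  let Φ : ℍ[ℝ] →ₗ[ℝ] A :=
    { toFun := fun q => q.re • o + q.imI • i + q.imJ • j + q.imK • k
      map_add' := fun x y => by simp only [re_add, imI_add, imJ_add, imK_add]; module
      map_smul' := fun c x => by
        simp only [re_smul, imI_smul, imJ_smul, imK_smul, RingHom.id_apply, smul_eq_mul]; module }
  have hΦ : ∀ q, Φ q = q.re • o + q.imI • i + q.imJ • j + q.imK • k := fun _ => rfl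
  have hΦmul : ∀ x y, Φ (x * y) = n (Φ x) (Φ y) := fun x y => by
    simp only [hΦ, map_add, map_smul, LinearMap.add_apply, LinearMap.smul_apply, hl, hr, hii, hjj,
      hkk, hk, hjik, hik, hkj', hjk, hki', re_mul, imI_mul, imJ_mul, imK_mul]
    module
  have hΦnorm : ∀ x, ‖Φ x‖ = ‖x‖ := fun x => by
    rw [← sq_eq_sq₀ (norm_nonneg _) (norm_nonneg _), pow_two ‖x‖, ← normSq_eq_norm_mul_self,
      normSq_def', ← real_inner_self_eq_norm_sq, hΦ]
    simp only [inner_add_left, inner_add_right, real_inner_smul_left, real_inner_smul_right,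
      inner_eq_zero_symm.1 hio, inner_eq_zero_symm.1 hjo, inner_eq_zero_symm.1 hji,
      inner_eq_zero_symm.1 hko, inner_eq_zero_symm.1 hki, inner_eq_zero_symm.1 hkj, hio, hjo, hji,
      hko, hki, hkj]
    simp only [real_inner_self_eq_norm_sq, ho, hi, hj, hk1]
    ring
  let Φi : ℍ[ℝ] →ₗᵢ[ℝ] A := ⟨Φ, hΦnorm⟩
  let e : ℍ[ℝ] ≃ₗᵢ[ℝ] A := Φi.toLinearIsometryEquiv (by rw [finrank_eq_four, hdim])
  refine ⟨e.symm, fun x y => e.injective ?_⟩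
  have he : ∀ x y, e (x * y) = n (e x) (e y) := hΦmul
  rw [he]
  simp

end Hurwitz

section AbsoluteValued

open Module

variable {A : Type*} [NormedAddCommGroup A] [NormedSpace ℝ A]

/-- In a finite-dimensional absolute-valued algebra left multiplication by a unit vector is a
surjective isometry. -/
theorem exists_isometryEquiv_mul_left [FiniteDimensional ℝ A] {mul : A →ₗ[ℝ] A →ₗ[ℝ] A}
    (habs : ∀ x y : A, ‖mul x y‖ = ‖x‖ * ‖y‖) {a : A} (ha : ‖a‖ = 1) :
    ∃ g : A ≃ₗᵢ[ℝ] A, ∀ x, g x = mul a x :=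
  ⟨(⟨mul a, fun x => by rw [habs, ha, one_mul]⟩ : A →ₗᵢ[ℝ] A).toLinearIsometryEquiv rfl,
    fun _ => rfl⟩

/-- A finite-dimensional absolute-valued algebra is Euclidean. -/
theorem innerProductSpaceable_of_absoluteValued [FiniteDimensional ℝ A]
    {mul : A →ₗ[ℝ] A →ₗ[ℝ] A} (habs : ∀ x y : A, ‖mul x y‖ = ‖x‖ * ‖y‖) :
    InnerProductSpaceable A := by
  refine .of_transitive fun x y hx hy => ?_
  have habs' : ∀ x y : A, ‖mul.flip x y‖ = ‖x‖ * ‖y‖ := fun x y => by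
    rw [LinearMap.flip_apply, habs, mul_comm]
  obtain ⟨g, hg⟩ := exists_isometryEquiv_mul_left habs' hx
  have ha : mul (g.symm y) x = y := by
    have h := hg (g.symm y)
    rwa [g.apply_symm_apply, LinearMap.flip_apply, eq_comm] at h
  obtain ⟨f, hf⟩ := exists_isometryEquiv_mul_left habs (a := g.symm y)
    (by rw [g.symm.norm_map, hy])
  exact ⟨f, by rw [hf, ha]⟩

/-- Every four-dimensional absolute-valued algebra is a principal isotope of `ℍ`. -/
theorem exists_equiv_quaternion_isotope {mul : A →ₗ[ℝ] A →ₗ[ℝ] A}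
    (habs : ∀ x y : A, ‖mul x y‖ = ‖x‖ * ‖y‖) (hdim : finrank ℝ A = 4) :
    ∃ (ψ : A ≃ₗᵢ[ℝ] ℍ[ℝ]) (f g : ℍ[ℝ] ≃ₗᵢ[ℝ] ℍ[ℝ]), ∀ x y, ψ (mul x y) = f (ψ x) * g (ψ y) := by
  have : FiniteDimensional ℝ A := FiniteDimensional.of_finrank_pos (by omega)
  have : InnerProductSpaceable A := innerProductSpaceable_of_absoluteValued habs
  have : Nontrivial A := nontrivial_of_finrank_pos (R := ℝ) (by omega)
  obtain ⟨e, he⟩ := exists_norm_eq A zero_le_one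
  obtain ⟨L, hL⟩ := exists_isometryEquiv_mul_left habs he
  obtain ⟨R, hR⟩ := exists_isometryEquiv_mul_left (mul := mul.flip)
    (fun x y => by rw [LinearMap.flip_apply, habs, mul_comm]) he
  let n : A →ₗ[ℝ] A →ₗ[ℝ] A :=
    mul.compl₁₂ (R.symm.toLinearEquiv : A →ₗ[ℝ] A) (L.symm.toLinearEquiv : A →ₗ[ℝ] A)
  have hn : ∀ x y, n x y = mul (R.symm x) (L.symm y) := fun _ _ => rfl
  have hRe : R.symm (mul e e) = e := by rw [LinearIsometryEquiv.symm_apply_eq, hR]; rfl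
  have hLe : L.symm (mul e e) = e := by rw [LinearIsometryEquiv.symm_apply_eq, hL]
  let _ : InnerProductSpace ℝ A :=
    InnerProductSpace.ofNorm ℝ InnerProductSpaceable.parallelogram_identity
  obtain ⟨ψ, hψ⟩ := exists_equiv_quaternion_of_unit (n := n) (o := mul e e)
    (fun x y => by rw [hn, habs, R.symm.norm_map, L.symm.norm_map]) hdim
    (by rw [habs, he, one_mul])
    (fun x => by rw [hn, hRe, ← hL, L.apply_symm_apply])
    (fun x => by rw [hn, hLe, ← LinearMap.flip_apply, ← hR, R.apply_symm_apply])
  refine ⟨ψ, (ψ.symm.trans R).trans ψ, (ψ.symm.trans L).trans ψ, fun x y => ?_⟩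
  have h := hψ (R x) (L y)
  rw [hn, R.symm_apply_apply, L.symm_apply_apply] at h
  simpa using h

theorem Quaternion.exists_linearEquiv_mul_mul {p q : ℍ[ℝ]} (hp : ‖p‖ = 1) (hq : ‖q‖ = 1) :
    ∃ g : ℍ[ℝ] ≃ₗ[ℝ] ℍ[ℝ], ∀ x, g x = p * x * q :=
  ⟨{ LinearMap.mulLeftRight ℝ (p, q) with
      invFun := fun x => star p * x * star q
      left_inv := fun x => by
        simp [mul_assoc, star_mul_cancel_left hp, self_mul_star_of_norm_eq_one hq]
      right_inv := fun x => by
        simp [mul_assoc, mul_star_cancel_left hp, star_mul_self_of_norm_eq_one hq] },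
    fun _ => rfl⟩

/-- The identity `(x, x², x²) = 0` is transported along isomorphisms. -/
theorem identity_of_equiv {mul : A →ₗ[ℝ] A →ₗ[ℝ] A}
    (H : ∀ x : A, mul (mul x (mul x x)) (mul x x) = mul x (mul (mul x x) (mul x x)))
    (φ : A ≃ₗ[ℝ] ℍ[ℝ]) {m : ℍ[ℝ] → ℍ[ℝ] → ℍ[ℝ]} (hφ : ∀ x y, φ (mul x y) = m (φ x) (φ y))
    (x : ℍ[ℝ]) : m (m x (m x x)) (m x x) = m x (m (m x x) (m x x)) := by
  have h := congrArg φ (H (φ.symm x))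
  simpa only [hφ, φ.apply_symm_apply] using h

/-- An algebra with product `p x q y r` on `ℍ` satisfying `(x, x², x²) = 0` is isomorphic to `ℍ`. -/
theorem exists_equiv_quaternion {mul : A →ₗ[ℝ] A →ₗ[ℝ] A}
    (H : ∀ x : A, mul (mul x (mul x x)) (mul x x) = mul x (mul (mul x x) (mul x x)))
    {ψ : A ≃ₗ[ℝ] ℍ[ℝ]} {p q r : ℍ[ℝ]} (hp : ‖p‖ = 1) (hq : ‖q‖ = 1) (hr : ‖r‖ = 1)
    (hψ : ∀ x y, ψ (mul x y) = p * ψ x * q * ψ y * r) :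
    ∃ e : A ≃ₗ[ℝ] ℍ[ℝ], ∀ x y, e (mul x y) = e x * e y := by
  obtain ⟨g, hg⟩ := exists_linearEquiv_mul_mul hq norm_one
  obtain ⟨φ, hφ⟩ : ∃ φ : A ≃ₗ[ℝ] ℍ[ℝ], ∀ x, φ x = q * ψ x := ⟨ψ.trans g, by simp [hg]⟩
  obtain ⟨a, ha⟩ : ∃ a, a = q * p * star q := ⟨_, rfl⟩
  have ha1 : ‖a‖ = 1 := by simp [ha, hp, hq]
  have hm : ∀ x y, φ (mul x y) = a * φ x * φ y * r := fun x y => by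
    simp only [hφ, hψ, ha, mul_assoc, star_mul_cancel_left hq]
  obtain ⟨rfl | rfl, rfl | rfl⟩ := eq_of_identity_mul ha1 hr
    (identity_of_equiv H φ (m := fun x y => a * x * y * r) hm)
  · exact ⟨φ, by simp [hm]⟩
  · exact ⟨φ.trans (LinearEquiv.neg ℝ), by simp [hm]⟩
  · exact ⟨φ.trans (LinearEquiv.neg ℝ), by simp [hm]⟩
  · exact ⟨φ, by simp [hm]⟩

/-- An algebra with product `p x q ȳ r` on `ℍ` satisfying `(x, x², x²) = 0` is isomorphic to `ℍ*`
or to `ℍ*(1,i)`. -/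
theorem exists_equiv_quaternion_star {mul : A →ₗ[ℝ] A →ₗ[ℝ] A}
    (H : ∀ x : A, mul (mul x (mul x x)) (mul x x) = mul x (mul (mul x x) (mul x x)))
    {ψ : A ≃ₗ[ℝ] ℍ[ℝ]} {p q r : ℍ[ℝ]} (hp : ‖p‖ = 1) (hq : ‖q‖ = 1) (hr : ‖r‖ = 1)
    (hψ : ∀ x y, ψ (mul x y) = p * ψ x * q * star (ψ y) * r) :
    (∃ e : A ≃ₗ[ℝ] ℍ[ℝ], ∀ x y, e (mul x y) = e x * star (e y)) ∨
      ∃ e : A ≃ₗ[ℝ] ℍ[ℝ], ∀ x y, e (mul x y) = e x * quatI * star (e y) := by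
  obtain ⟨v, hv, s, t, hst⟩ := exists_conj_mem_complex (r * q * star r)
  obtain ⟨g, hg⟩ := exists_linearEquiv_mul_mul hv
    (q := star r * star v) (by simp [hv, hr])
  obtain ⟨φ, hφ⟩ : ∃ φ : A ≃ₗ[ℝ] ℍ[ℝ], ∀ x, φ x = v * ψ x * (star r * star v) :=
    ⟨ψ.trans g, by simp [hg]⟩
  obtain ⟨a, ha⟩ : ∃ a, a = v * p * star v := ⟨_, rfl⟩
  obtain ⟨b, hb⟩ : ∃ b, b = v * (r * q * star r) * star v := ⟨_, rfl⟩
  have hm : ∀ x y, φ (mul x y) = a * φ x * b * star (φ y) := fun x y => by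
    simp only [hφ, hψ, ha, hb, mul_assoc, star_mul, star_star, star_mul_cancel_left hv,
      star_mul_cancel_left hr, mul_star_cancel_left hr]
  obtain ⟨ha1, hb1⟩ := eq_of_identity_mul_star (a := a) (b := b)
    (by simp [ha, hp, hv]) (by simp [hb, hq, hr, hv])
    (by simp [hb, hst]) (by simp [hb, hst])
    (identity_of_equiv H φ (m := fun x y => a * x * b * star y) hm)
  clear ha hb
  obtain ⟨φ', h'⟩ : ∃ φ' : A ≃ₗ[ℝ] ℍ[ℝ], (∀ x y, φ' (mul x y) = φ' x * b * star (φ' y)) := by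
    rcases ha1 with rfl | rfl
    · exact ⟨φ, by simp [hm]⟩
    · exact ⟨φ.trans (LinearEquiv.neg ℝ), by simp [hm]⟩
  rcases hb1 with (rfl | rfl) | (rfl | rfl)
  · exact Or.inl ⟨φ', by simp [h']⟩
  · exact Or.inl ⟨φ'.trans (LinearEquiv.neg ℝ), by simp [h']⟩
  · exact Or.inr ⟨φ', by simp [h']⟩
  · exact Or.inr ⟨φ'.trans (LinearEquiv.neg ℝ), by simp [h']⟩

/-- An algebra with product `p x̄ q y r` on `ℍ` does not satisfy `(x, x², x²) = 0`. -/
theorem false_of_star_left {mul : A →ₗ[ℝ] A →ₗ[ℝ] A}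
    (H : ∀ x : A, mul (mul x (mul x x)) (mul x x) = mul x (mul (mul x x) (mul x x)))
    {ψ : A ≃ₗ[ℝ] ℍ[ℝ]} {p q r : ℍ[ℝ]} (hp : ‖p‖ = 1) (hq : ‖q‖ = 1) (hr : ‖r‖ = 1)
    (hψ : ∀ x y, ψ (mul x y) = p * star (ψ x) * q * ψ y * r) : False := by
  obtain ⟨v, hv, s, t, hst⟩ := exists_conj_mem_complex (star p * q * p)
  obtain ⟨g, hg⟩ := exists_linearEquiv_mul_mul (p := v * star p) (q := star v)
    (by simp [hv, hp]) (by simp [hv])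
  obtain ⟨φ, hφ⟩ : ∃ φ : A ≃ₗ[ℝ] ℍ[ℝ], ∀ x, φ x = v * star p * ψ x * star v :=
    ⟨ψ.trans g, by simp [hg]⟩
  obtain ⟨a, ha⟩ : ∃ a, a = v * (star p * q * p) * star v := ⟨_, rfl⟩
  obtain ⟨b, hb⟩ : ∃ b, b = v * r * star v := ⟨_, rfl⟩
  have hm : ∀ x y, φ (mul x y) = star (φ x) * a * φ y * b := fun x y => by
    simp only [hφ, hψ, ha, hb, mul_assoc, star_mul, star_star, star_mul_cancel_left hv,
      star_mul_cancel_left hp, mul_star_cancel_left hp]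
  exact not_identity_star_mul (a := a) (b := b) (by simp [ha, hp, hq, hv]) (by simp [hb, hr, hv])
    (by simp [ha, hst]) (by simp [ha, hst])
    (identity_of_equiv H φ (m := fun x y => star x * a * y * b) hm)

/-- An algebra with product `p x̄ q ȳ r` on `ℍ` does not satisfy `(x, x², x²) = 0`. -/
theorem false_of_star_star {mul : A →ₗ[ℝ] A →ₗ[ℝ] A}
    (H : ∀ x : A, mul (mul x (mul x x)) (mul x x) = mul x (mul (mul x x) (mul x x)))
    {ψ : A ≃ₗ[ℝ] ℍ[ℝ]} {p q r : ℍ[ℝ]} (hp : ‖p‖ = 1) (hq : ‖q‖ = 1) (hr : ‖r‖ = 1)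
    (hψ : ∀ x y, ψ (mul x y) = p * star (ψ x) * q * star (ψ y) * r) : False := by
  obtain ⟨g, hg⟩ := exists_linearEquiv_mul_mul (p := star q) (by simpa using hq) norm_one
  obtain ⟨φ, hφ⟩ : ∃ φ : A ≃ₗ[ℝ] ℍ[ℝ], ∀ x, φ x = star q * ψ x := ⟨ψ.trans g, by simp [hg]⟩
  obtain ⟨a, ha⟩ : ∃ a, a = star q * p := ⟨_, rfl⟩
  obtain ⟨b, hb⟩ : ∃ b, b = star q * r := ⟨_, rfl⟩
  have hm : ∀ x y, φ (mul x y) = a * star (φ x) * star (φ y) * b := fun x y => by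
    simp only [hφ, hψ, ha, hb, mul_assoc, star_mul, star_star, mul_star_cancel_left hq]
  exact not_identity_star_mul_star (a := a) (b := b) (by simp [ha, hp, hq]) (by simp [hb, hq, hr])
    (identity_of_equiv H φ (m := fun x y => a * star x * star y * b) hm)

end AbsoluteValued

/-- A 4-dimensional absolute-valued real algebra satisfies the identity `(x, x², x²) = 0`
if and only if it is isomorphic to `ℍ`, to `ℍ*` (product `x ⊙ y = x * ȳ`), or to
`ℍ*(1,i)` (product `x ⊙ y = x * i * ȳ`). -/
theorem stmt_11 {A : Type*} [NormedAddCommGroup A] [NormedSpace ℝ A]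
    (mul : A →ₗ[ℝ] A →ₗ[ℝ] A)
    (habs : ∀ x y : A, ‖mul x y‖ = ‖x‖ * ‖y‖)
    (hdim : Module.finrank ℝ A = 4) :
    (∀ x : A, mul (mul x (mul x x)) (mul x x) = mul x (mul (mul x x) (mul x x)))
      ↔ ((∃ e : A ≃ₗ[ℝ] Quaternion ℝ, ∀ x y : A, e (mul x y) = e x * e y) ∨
          (∃ e : A ≃ₗ[ℝ] Quaternion ℝ, ∀ x y : A, e (mul x y) = e x * star (e y)) ∨
          (∃ e : A ≃ₗ[ℝ] Quaternion ℝ,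
            ∀ x y : A, e (mul x y) = e x * quatI * star (e y))) := by
  constructor
  · intro H
    obtain ⟨ψ, f, g, hψ⟩ := exists_equiv_quaternion_isotope habs hdim
    obtain ⟨p, q, hp, hq, hf⟩ := linearIsometryEquiv_eq_mul_mul f
    obtain ⟨q', r, hq', hr, hg⟩ := linearIsometryEquiv_eq_mul_mul g
    have hqq : ‖q * q'‖ = 1 := by rw [norm_mul, hq, hq', one_mul]
    rcases hf with hf | hf <;> rcases hg with hg | hg <;> simp only [hf, hg] at hψ
    · exact Or.inl (exists_equiv_quaternion H (ψ := ψ.toLinearEquiv) hp hqq hr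
        fun x y => (hψ x y).trans (by simp [mul_assoc]))
    · exact Or.inr (exists_equiv_quaternion_star H (ψ := ψ.toLinearEquiv) hp hqq hr
        fun x y => (hψ x y).trans (by simp [mul_assoc]))
    · exact (false_of_star_left H (ψ := ψ.toLinearEquiv) hp hqq hr
        fun x y => (hψ x y).trans (by simp [mul_assoc])).elim
    · exact (false_of_star_star H (ψ := ψ.toLinearEquiv) hp hqq hr
        fun x y => (hψ x y).trans (by simp [mul_assoc])).elim
  · rintro (⟨e, he⟩ | ⟨e, he⟩ | ⟨e, he⟩) x <;> apply e.injective
    · simp only [he, mul_assoc]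
    · simp only [he, star_mul, self_mul_star, star_coe, mul_assoc]
    · have hI : star quatI = -quatI := by rw [quatI_eq]; ext <;> simp
      simp [he, star_mul, hI, mul_assoc]
end
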